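/- arXiv:math-ph/0703046 — 3 statements merged into one kernel-verified Lean document; each statement's English description precedes it below -/
import Mathlib

section
/- Let μ be a continuous non-negative function on [0,1], not identically zero, twice continuously differentiable, with μ(1) ≠ 0, and let λ > 0. Suppose u : [0,∞) → ℝ is continuous, satisfies |u(t)| ≤ M e^{ct} for some constants M, c > 0, and its Laplace transform satisfies ∫₀^∞ e^{−pt} u(t) dt = K(p)/(p K(p) − λ) for all sufficiently large real p (note p K(p) → ∞ as p → ∞, so p K(p) − λ > 0 for large p). Then u is non-decreasing on [0,∞) and u(t) ≥ 1 for all t ≥ 0. -/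
open MeasureTheory Filter Set

/-- `K(p) = ∫₀¹ p^{α-1} μ(α) dα` for real `p > 0`. -/
noncomputable def Kreal (μ : ℝ → ℝ) (p : ℝ) : ℝ :=
  ∫ α in (0:ℝ)..1, p ^ (α - 1) * μ α

/-- Complete monotonicity up to order `n` on `(a, ∞)`. -/
def CMon (a : ℝ) : ℕ → (ℝ → ℝ) → Prop
  | 0, g => ∀ p, a < p → 0 ≤ g p
  | n + 1, g => (∀ p, a < p → 0 ≤ g p) ∧
      ∃ g' : ℝ → ℝ, (∀ p, a < p → HasDerivAt g (-g' p) p) ∧ CMon a n g'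

lemma CMon.nonneg {a : ℝ} {n : ℕ} {g : ℝ → ℝ} (h : CMon a n g) : ∀ p, a < p → 0 ≤ g p := by
  cases n with
  | zero => exact h
  | succ n => exact h.1

lemma CMon.pred {a : ℝ} {n : ℕ} {g : ℝ → ℝ} (h : CMon a (n + 1) g) : CMon a n g := by
  induction n generalizing g with
  | zero => exact h.1
  | succ n ih =>
    obtain ⟨h0, g', hd, h'⟩ := h
    exact ⟨h0, g', hd, ih h'⟩

lemma CMon.add {a : ℝ} {n : ℕ} {g h : ℝ → ℝ} (hg : CMon a n g) (hh : CMon a n h) :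
    CMon a n (fun p => g p + h p) := by
  induction n generalizing g h with
  | zero => exact fun p hp => add_nonneg (hg p hp) (hh p hp)
  | succ n ih =>
    obtain ⟨g0, g', gd, g1⟩ := hg
    obtain ⟨h0, h', hd, h1⟩ := hh
    refine ⟨fun p hp => add_nonneg (g0 p hp) (h0 p hp), fun p => g' p + h' p, ?_, ih g1 h1⟩
    intro p hp
    exact ((gd p hp).fun_add (hd p hp)).congr_deriv (by ring)

lemma CMon.mul {a : ℝ} {n : ℕ} {g h : ℝ → ℝ} (hg : CMon a n g) (hh : CMon a n h) :
    CMon a n (fun p => g p * h p) := by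
  induction n generalizing g h with
  | zero => exact fun p hp => mul_nonneg (hg p hp) (hh p hp)
  | succ n ih =>
    have hgp := hg.pred
    have hhp := hh.pred
    obtain ⟨g0, g', gd, g1⟩ := hg
    obtain ⟨h0, h', hd, h1⟩ := hh
    refine ⟨fun p hp => mul_nonneg (g0 p hp) (h0 p hp), fun p => g' p * h p + g p * h' p, ?_,
      (ih g1 hhp).add (ih hgp h1)⟩
    intro p hp
    exact ((gd p hp).fun_mul (hd p hp)).congr_deriv (by ring)

lemma CMon.const {a : ℝ} {n : ℕ} {k : ℝ} (hk : 0 ≤ k) : CMon a n (fun _ => k) := by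
  induction n generalizing k with
  | zero => exact fun p hp => hk
  | succ n ih =>
    refine ⟨fun p hp => hk, fun _ => 0, ?_, ih le_rfl⟩
    intro p hp
    simpa using hasDerivAt_const p k

lemma CMon.inv {a : ℝ} {F φ : ℝ → ℝ} (hF : ∀ p, a < p → 0 < F p)
    (hd : ∀ p, a < p → HasDerivAt F (φ p) p) (hφ : ∀ n, CMon a n φ) (n : ℕ) :
    CMon a n (fun p => (F p)⁻¹) := by
  induction n with
  | zero => exact fun p hp => inv_nonneg.2 (hF p hp).le
  | succ n ih =>
    refine ⟨fun p hp => inv_nonneg.2 (hF p hp).le, fun p => φ p * ((F p)⁻¹ * (F p)⁻¹), ?_,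
      (hφ n).mul (ih.mul ih)⟩
    intro p hp
    have := (hd p hp).fun_inv (hF p hp).ne'
    have h0 := (hF p hp).ne'
    exact this.congr_deriv (by field_simp)

lemma hasDerivAt_powInt {w : ℝ → ℝ} (hw : ContinuousOn w (Icc 0 1)) (β : ℝ) {p : ℝ} (hp : 0 < p) :
    HasDerivAt (fun p : ℝ => ∫ α in (0:ℝ)..1, p ^ (α - β) * w α)
      (∫ α in (0:ℝ)..1, p ^ (α - (β + 1)) * ((α - β) * w α)) p := by
  have hcont : ∀ (γ x : ℝ) (v : ℝ → ℝ), 0 < x → ContinuousOn v (Icc 0 1) →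
      ContinuousOn (fun α : ℝ => x ^ (α - γ) * v α) (Icc 0 1) := by
    intro γ x v hx hv
    refine ContinuousOn.mul (Continuous.continuousOn ?_) hv
    exact Continuous.rpow continuous_const (by fun_prop) (fun _ => Or.inl hx.ne')
  have hw' : ContinuousOn (fun α => (α - β) * w α) (Icc 0 1) := by fun_prop
  have hsub : uIoc (0:ℝ) 1 ⊆ Icc 0 1 := by
    rw [uIoc_of_le zero_le_one]; exact Ioc_subset_Icc_self
  have hmeas : ∀ (γ x : ℝ) (v : ℝ → ℝ), 0 < x → ContinuousOn v (Icc 0 1) →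
      AEStronglyMeasurable (fun α : ℝ => x ^ (α - γ) * v α) (volume.restrict (uIoc 0 1)) := by
    intro γ x v hx hv
    exact ((hcont γ x v hx hv).mono hsub).aestronglyMeasurable measurableSet_uIoc
  have hII : ∀ (γ x : ℝ) (v : ℝ → ℝ), 0 < x → ContinuousOn v (Icc 0 1) →
      IntervalIntegrable (fun α : ℝ => x ^ (α - γ) * v α) volume 0 1 := by
    intro γ x v hx hv
    apply ContinuousOn.intervalIntegrable
    rw [uIcc_of_le zero_le_one]
    exact hcont γ x v hx hv
  have hK : IsCompact (Icc (p/2) (2*p) ×ˢ Icc (0:ℝ) 1) := isCompact_Icc.prod isCompact_Icc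
  obtain ⟨C, hC⟩ := hK.exists_bound_of_continuousOn
    (f := fun z : ℝ × ℝ => z.1 ^ (z.2 - (β + 1)) * ((z.2 - β) * w z.2)) (by
      refine ContinuousOn.mul ?_ ?_
      · refine ContinuousOn.rpow (by fun_prop) (by fun_prop) ?_
        rintro ⟨x, y⟩ ⟨hx, hy⟩
        left
        have := hx.1
        simp only at this ⊢
        linarith
      · exact hw'.comp continuousOn_snd (fun z hz => hz.2))
  refine (intervalIntegral.hasDerivAt_integral_of_dominated_loc_of_deriv_le
    (s := Icc (p/2) (2*p)) (bound := fun _ => C)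
    (F := fun (p : ℝ) α => p ^ (α - β) * w α)
    (F' := fun (p : ℝ) α => p ^ (α - (β + 1)) * ((α - β) * w α))
    (Icc_mem_nhds (by linarith) (by linarith)) ?_ (hII _ _ _ hp hw) (hmeas _ _ _ hp hw') ?_
    (by simp) ?_).2
  · filter_upwards [lt_mem_nhds hp] with x hx
    exact hmeas _ _ _ hx hw
  · refine Eventually.of_forall fun α hα x hx => hC (x, α) ⟨hx, hsub hα⟩
  · refine Eventually.of_forall fun α hα x hx => ?_
    have hx0 : 0 < x := by have := hx.1; linarith
    have := (Real.hasDerivAt_rpow_const (p := α - β) (Or.inl hx0.ne')).mul_const (w α)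
    refine this.congr_deriv ?_
    rw [show α - (β + 1) = α - β - 1 by ring]; ring

lemma CMon.powInt {a : ℝ} (ha : 0 ≤ a) (n : ℕ) {w : ℝ → ℝ} (hw : ContinuousOn w (Icc 0 1))
    (hw0 : ∀ α ∈ Icc (0:ℝ) 1, 0 ≤ w α) {β : ℝ} (hβ : 1 ≤ β) :
    CMon a n (fun p : ℝ => ∫ α in (0:ℝ)..1, p ^ (α - β) * w α) := by
  induction n generalizing w β with
  | zero =>
    intro p hp
    refine intervalIntegral.integral_nonneg zero_le_one fun α hα => ?_
    exact mul_nonneg (Real.rpow_nonneg (ha.trans hp.le) _) (hw0 α hα)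
  | succ n ih =>
    refine ⟨?_, fun p => ∫ α in (0:ℝ)..1, p ^ (α - (β + 1)) * ((β - α) * w α), ?_, ?_⟩
    · intro p hp
      refine intervalIntegral.integral_nonneg zero_le_one fun α hα => ?_
      exact mul_nonneg (Real.rpow_nonneg (ha.trans hp.le) _) (hw0 α hα)
    · intro p hp
      refine (hasDerivAt_powInt hw β (ha.trans_lt hp)).congr_deriv ?_
      rw [← intervalIntegral.integral_neg]
      congr 1; ext α; ring
    · refine ih (by fun_prop) (fun α hα => mul_nonneg ?_ (hw0 α hα)) (by linarith)
      linarith [hα.2]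

/-- moments -/
noncomputable def momI (u : ℝ → ℝ) (n : ℕ) (p : ℝ) : ℝ :=
  ∫ t in Ioi (0:ℝ), t ^ n * Real.exp (-p * t) * u t

lemma integrableOn_pow_exp (n : ℕ) {q : ℝ} (hq : 0 < q) :
    IntegrableOn (fun t : ℝ => t ^ n * Real.exp (-q * t)) (Ioi 0) := by
  have := integrableOn_rpow_mul_exp_neg_mul_rpow (p := 1) (s := n) (b := q)
    (by have : (0:ℝ) ≤ n := n.cast_nonneg
        linarith) one_pos hq
  simpa using this

lemma integral_pow_exp (n : ℕ) {q : ℝ} (hq : 0 < q) :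
    ∫ t in Ioi (0:ℝ), t ^ n * Real.exp (-q * t) = n.factorial / q ^ (n + 1) := by
  have := Real.integral_rpow_mul_exp_neg_mul_Ioi (a := n + 1) (r := q) (by positivity) hq
  rw [Real.Gamma_nat_eq_factorial] at this
  simp only [add_sub_cancel_right, Real.rpow_natCast] at this
  rw [show ((n:ℝ) + 1) = ((n + 1 : ℕ) : ℝ) by push_cast; rfl, Real.rpow_natCast] at this
  simp only [neg_mul]
  rw [this, one_div, inv_pow]
  field_simp

section
variable {u : ℝ → ℝ} {M c : ℝ}

lemma mom_meas (hu : ContinuousOn u (Ici 0)) (n : ℕ) (p : ℝ) :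
    AEStronglyMeasurable (fun t : ℝ => t ^ n * Real.exp (-p * t) * u t)
      (volume.restrict (Ioi 0)) := by
  have h2 : ContinuousOn u (Ioi 0) := hu.mono Ioi_subset_Ici_self
  exact ContinuousOn.aestronglyMeasurable (by fun_prop) measurableSet_Ioi

lemma mom_bound (hbound : ∀ t : ℝ, 0 ≤ t → |u t| ≤ M * Real.exp (c * t)) (n : ℕ) {p q : ℝ}
    (hpq : q ≤ p) {t : ℝ} (ht : 0 < t) :
    ‖t ^ n * Real.exp (-p * t) * u t‖ ≤ M * (t ^ n * Real.exp (-(q - c) * t)) := by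
  rw [norm_mul, Real.norm_of_nonneg (by positivity), Real.norm_eq_abs]
  have h1 := hbound t ht.le
  have h2 : Real.exp (-p * t) ≤ Real.exp (-q * t) := Real.exp_le_exp.2 (by nlinarith)
  calc t ^ n * Real.exp (-p * t) * |u t| ≤ t ^ n * Real.exp (-q * t) * (M * Real.exp (c * t)) := by
        gcongr
    _ = M * (t ^ n * (Real.exp (-q * t) * Real.exp (c * t))) := by ring
    _ = _ := by rw [← Real.exp_add]; ring_nf

lemma mom_integrable (hu : ContinuousOn u (Ici 0))
    (hbound : ∀ t : ℝ, 0 ≤ t → |u t| ≤ M * Real.exp (c * t)) (n : ℕ) {p : ℝ} (hp : c < p) :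
    IntegrableOn (fun t : ℝ => t ^ n * Real.exp (-p * t) * u t) (Ioi 0) := by
  refine Integrable.mono' ((integrableOn_pow_exp n (sub_pos.2 hp)).const_mul M) (mom_meas hu n p) ?_
  filter_upwards [ae_restrict_mem measurableSet_Ioi] with t ht
  exact mom_bound hbound n le_rfl ht

lemma mom_deriv (hu : ContinuousOn u (Ici 0))
    (hbound : ∀ t : ℝ, 0 ≤ t → |u t| ≤ M * Real.exp (c * t)) (n : ℕ) {p : ℝ} (hp : c < p) :
    HasDerivAt (momI u n) (-momI u (n + 1) p) p := by
  have := (hasDerivAt_integral_of_dominated_loc_of_deriv_le (μ := volume.restrict (Ioi (0:ℝ)))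
    (s := Ici ((p + c) / 2))
    (bound := fun t => M * (t ^ (n+1) * Real.exp (-((p + c) / 2 - c) * t)))
    (F := fun (p : ℝ) t => t ^ n * Real.exp (-p * t) * u t)
    (F' := fun (p : ℝ) t => - (t ^ (n + 1) * Real.exp (-p * t) * u t)) (x₀ := p)
    (Ici_mem_nhds (by linarith)) (Eventually.of_forall fun x => mom_meas hu n x)
    (mom_integrable hu hbound n hp) (mom_meas hu (n+1) p).neg ?_
    ((integrableOn_pow_exp (n+1) (by linarith)).const_mul M) ?_).2
  · rw [integral_neg] at this
    exact this
  · filter_upwards [ae_restrict_mem measurableSet_Ioi] with t ht x hx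
    rw [norm_neg]
    exact mom_bound hbound (n+1) hx ht
  · filter_upwards with t x hx
    have h1 : HasDerivAt (fun x : ℝ => -x * t) (-1 * t) x := (hasDerivAt_id x).neg.mul_const t
    have := (h1.exp.const_mul (t ^ n)).mul_const (u t)
    exact this.congr_deriv (by ring)

end

lemma integral_sq_dev (n : ℕ) {q : ℝ} (hq : 0 < q) (t : ℝ) :
    IntegrableOn (fun s : ℝ => s ^ n * Real.exp (-q * s) * (s - t) ^ 2) (Ioi 0) ∧
    ∫ s in Ioi (0:ℝ), s ^ n * Real.exp (-q * s) * (s - t) ^ 2 =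
      n.factorial / q ^ (n + 1) * ((n + 2) * (n + 1) / q ^ 2 - 2 * t * (n + 1) / q + t ^ 2) := by
  have e : (fun s : ℝ => s ^ n * Real.exp (-q * s) * (s - t) ^ 2) = fun s =>
      (s ^ (n + 2) * Real.exp (-q * s) - (2 * t) * (s ^ (n + 1) * Real.exp (-q * s))) +
        t ^ 2 * (s ^ n * Real.exp (-q * s)) := by
    ext s; ring
  have i2 := integrableOn_pow_exp (n + 2) hq
  have i1 := (integrableOn_pow_exp (n + 1) hq).const_mul (2 * t)
  have i0 := (integrableOn_pow_exp n hq).const_mul (t ^ 2)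
  rw [e]
  refine ⟨(i2.sub i1).add i0, ?_⟩
  have i21 : Integrable (fun s : ℝ => s ^ (n + 2) * Real.exp (-q * s) -
      (2 * t) * (s ^ (n + 1) * Real.exp (-q * s))) (volume.restrict (Ioi 0)) := i2.sub i1
  rw [integral_add i21 i0, integral_sub i2 i1, integral_const_mul, integral_const_mul,
    integral_pow_exp _ hq, integral_pow_exp _ hq, integral_pow_exp _ hq]
  rw [Nat.factorial_succ (n + 1), Nat.factorial_succ n]
  push_cast
  field_simp
  ring

/-- Post–Widder approximants -/
noncomputable def pw (u : ℝ → ℝ) (n : ℕ) (p : ℝ) : ℝ :=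
  p ^ (n + 1) / n.factorial * momI u n p

lemma pw_estimate {u : ℝ → ℝ} {M c : ℝ} (hu : ContinuousOn u (Ici 0)) (hcpos : 0 < c)
    (hbound : ∀ t : ℝ, 0 ≤ t → |u t| ≤ M * Real.exp (c * t)) {t ε C : ℝ} (ht : 0 < t)
    (hC0 : 0 ≤ C)
    (hC : ∀ s, 0 < s → |u s - u t| ≤ ε + C * (s - t) ^ 2 * Real.exp (c * s))
    (n : ℕ) (hn : 1 ≤ n) :
    |pw u n (n / t + c) - u t| ≤ ε + C * Real.exp (2 * c * t) * (t ^ 2 * 3) / n := by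
  have hn0 : (1:ℝ) ≤ n := by exact_mod_cast hn
  set q : ℝ := n / t with hq
  have hq0 : 0 < q := by positivity
  set p : ℝ := q + c with hp
  have hp0 : 0 < p := by positivity
  have hf : (0:ℝ) < n.factorial := by exact_mod_cast n.factorial_pos
  have hcp : c < p := by linarith
  have iu := mom_integrable hu hbound n hcp
  have ie := integrableOn_pow_exp n hp0
  obtain ⟨iq, eq⟩ := integral_sq_dev n hq0 t
  have key : |momI u n p - u t * (n.factorial / p ^ (n + 1))| ≤
      ε * (n.factorial / p ^ (n + 1)) + C * (n.factorial / q ^ (n + 1) *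
        ((n + 2) * (n + 1) / q ^ 2 - 2 * t * (n + 1) / q + t ^ 2)) := by
    rw [← integral_pow_exp n hp0, ← eq, momI, ← integral_const_mul, ← integral_const_mul,
      ← integral_const_mul, ← integral_sub iu (ie.const_mul _),
      ← integral_add (ie.const_mul _) (iq.const_mul _), ← Real.norm_eq_abs]
    refine norm_integral_le_of_norm_le ((ie.const_mul _).add (iq.const_mul _)) ?_
    filter_upwards [ae_restrict_mem measurableSet_Ioi] with s hs
    have hs0 : 0 < s := hs
    have h1 := hC s hs0
    have e1 : Real.exp (-q * s) = Real.exp (-p * s) * Real.exp (c * s) := by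
      rw [← Real.exp_add, hp]; ring_nf
    have e2 : s ^ n * Real.exp (-p * s) * u s - u t * (s ^ n * Real.exp (-p * s)) =
      (s ^ n * Real.exp (-p * s)) * (u s - u t) := by ring
    rw [e2, norm_mul, Real.norm_of_nonneg (by positivity), Real.norm_eq_abs, e1]
    calc _ ≤ (s ^ n * Real.exp (-p * s)) * (ε + C * (s - t) ^ 2 * Real.exp (c * s)) := by gcongr
      _ = _ := by ring
  have e3 : pw u n p - u t = p ^ (n + 1) / n.factorial *
      (momI u n p - u t * (n.factorial / p ^ (n + 1))) := by
    rw [pw]; field_simp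
  rw [e3, abs_mul, abs_of_nonneg (by positivity)]
  have e4 : ((n:ℝ) + 2) * (n + 1) / q ^ 2 - 2 * t * (n + 1) / q + t ^ 2 =
      t ^ 2 * (n + 2) / n ^ 2 := by
    rw [hq]; field_simp; ring
  rw [e4] at key
  have e5 : (p / q) ^ (n + 1) ≤ Real.exp (2 * c * t) := by
    have h1 : p / q = c * t / n + 1 := by rw [hp, hq]; field_simp; ring
    have h2 : p / q ≤ Real.exp (c * t / n) := by rw [h1]; exact Real.add_one_le_exp _
    calc (p / q) ^ (n + 1) ≤ Real.exp (c * t / n) ^ (n + 1) := by gcongr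
      _ = Real.exp ((n + 1 : ℕ) * (c * t / n)) := by rw [Real.exp_nat_mul]
      _ ≤ _ := by
        apply Real.exp_le_exp.2
        push_cast
        rw [← mul_div_assoc, div_le_iff₀ (by positivity)]
        nlinarith [mul_pos hcpos ht]
  have e6 : t ^ 2 * ((n:ℝ) + 2) / n ^ 2 ≤ t ^ 2 * 3 / n := by
    rw [div_le_div_iff₀ (by positivity) (by positivity)]
    have : ((n:ℝ) + 2) * n ≤ 3 * n ^ 2 := by nlinarith
    nlinarith [mul_le_mul_of_nonneg_left this (sq_nonneg t)]
  calc _ ≤ p ^ (n + 1) / n.factorial * (ε * (n.factorial / p ^ (n + 1)) +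
        C * (n.factorial / q ^ (n + 1) * (t ^ 2 * (n + 2) / n ^ 2))) := by gcongr
    _ = ε + C * (p / q) ^ (n + 1) * (t ^ 2 * (n + 2) / n ^ 2) := by
        clear_value q p
        rw [div_pow]; field_simp
    _ ≤ ε + C * Real.exp (2 * c * t) * (t ^ 2 * 3 / n) := by gcongr
    _ = _ := by ring

lemma pw_tendsto {u : ℝ → ℝ} {M c : ℝ} (hu : ContinuousOn u (Ici 0)) (hM : 0 < M) (hcpos : 0 < c)
    (hbound : ∀ t : ℝ, 0 ≤ t → |u t| ≤ M * Real.exp (c * t)) {t : ℝ} (ht : 0 < t) :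
    Tendsto (fun n : ℕ => pw u n (n / t + c)) atTop (nhds (u t)) := by
  rw [Metric.tendsto_atTop']
  intro ε hε
  have hct : ContinuousAt u t := hu.continuousAt (Ici_mem_nhds ht)
  obtain ⟨δ, hδ, hd⟩ := Metric.continuousAt_iff.1 hct (ε / 2) (by positivity)
  set C : ℝ := M * (1 + Real.exp (c * t)) / δ ^ 2 with hCdef
  have hC0 : 0 ≤ C := by positivity
  have hC : ∀ s, 0 < s → |u s - u t| ≤ ε / 2 + C * (s - t) ^ 2 * Real.exp (c * s) := by
    intro s hs
    by_cases h : dist s t < δ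
    · have := hd h
      rw [Real.dist_eq] at this
      have h2 : 0 ≤ C * (s - t) ^ 2 * Real.exp (c * s) := by positivity
      linarith
    · rw [Real.dist_eq, not_lt] at h
      have h1 : δ ^ 2 ≤ (s - t) ^ 2 := by rw [← sq_abs (s - t)]; gcongr
      have h2 : |u s - u t| ≤ |u s| + |u t| := abs_sub _ _
      have h3 := hbound s hs.le
      have h4 := hbound t ht.le
      have h5 : 1 ≤ Real.exp (c * s) := Real.one_le_exp (by positivity)
      have h6 : M * (1 + Real.exp (c * t)) ≤ C * (s - t) ^ 2 := by
        calc M * (1 + Real.exp (c * t)) = C * δ ^ 2 := by rw [hCdef]; field_simp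
          _ ≤ _ := by gcongr
      have h7 : M * (1 + Real.exp (c * t)) * Real.exp (c * s) ≤
        C * (s - t) ^ 2 * Real.exp (c * s) := by gcongr
      have h8 : M * Real.exp (c * t) * 1 ≤ M * Real.exp (c * t) * Real.exp (c * s) := by gcongr
      nlinarith
  obtain ⟨N, hN⟩ := exists_nat_gt (C * Real.exp (2 * c * t) * (t ^ 2 * 3) / (ε / 2))
  refine ⟨N + 1, fun n hn => ?_⟩
  have hnN : (N:ℝ) ≤ n := by exact_mod_cast (by omega : N ≤ n)
  have h1 := pw_estimate hu hcpos hbound ht hC0 hC n (by omega)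
  have hn0 : (0:ℝ) < n := by exact_mod_cast (by omega : 0 < n)
  have h2 : C * Real.exp (2 * c * t) * (t ^ 2 * 3) / n < ε / 2 := by
    have := hN.trans_le hnN
    rw [div_lt_iff₀ (by positivity)] at this ⊢
    linarith
  rw [Real.dist_eq]
  linarith

lemma chain_nonneg {a : ℝ} {J : ℕ → ℝ → ℝ}
    (hJ : ∀ n p, a < p → HasDerivAt (J n) (-J (n + 1) p) p) (m k : ℕ) (G : ℝ → ℝ)
    (hG : CMon a m G) (hGe : ∀ p, a < p → G p = p * J k p - k * J (k - 1) p) :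
    ∀ p, a < p → 0 ≤ p * J (k + m) p - (k + m : ℕ) * J (k + m - 1) p := by
  induction m generalizing k G with
  | zero =>
    intro p hp
    have := hG p hp
    rw [hGe p hp] at this
    simpa using this
  | succ m ih =>
    obtain ⟨-, G', hd, hG'⟩ := hG
    have := ih (k + 1) G' hG' ?_
    · rw [show k + 1 + m = k + (m + 1) by ring] at this
      exact this
    intro p hp
    have h1 : HasDerivAt (fun p => p * J k p - k * J (k - 1) p)
        (1 * J k p + p * (-J (k + 1) p) - k * (-J (k - 1 + 1) p)) p :=
      ((hasDerivAt_id p).fun_mul (hJ k p hp)).fun_sub ((hJ (k - 1) p hp).const_mul _)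
    have h2 : (fun p => p * J k p - k * J (k - 1) p) =ᶠ[nhds p] G := by
      filter_upwards [lt_mem_nhds hp] with x hx using (hGe x hx).symm
    have h3 := (hd p hp).unique (h1.congr_of_eventuallyEq h2.symm)
    have h4 : (k:ℝ) * J (k - 1 + 1) p = k * J k p := by
      cases k with
      | zero => simp
      | succ k => simp
    push_cast
    linarith

lemma pw_antitone {u : ℝ → ℝ} {a : ℝ} (ha : 0 ≤ a)
    (hJ : ∀ n p, a < p → HasDerivAt (momI u n) (-momI u (n + 1) p) p) (n : ℕ)
    (hpos : ∀ p, a < p → 0 ≤ p * momI u (n + 1) p - (n + 1 : ℕ) * momI u n p) :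
    AntitoneOn (pw u n) (Ioi a) := by
  have hder : ∀ p, a < p → HasDerivAt (pw u n)
      (((n + 1 : ℕ) * p ^ n / n.factorial) * momI u n p +
        p ^ (n + 1) / n.factorial * (-momI u (n + 1) p)) p := by
    intro p hp
    have := ((hasDerivAt_pow (n + 1) p).div_const (n.factorial : ℝ)).fun_mul (hJ n p hp)
    exact this.congr_deriv (by simp)
  refine antitoneOn_of_deriv_nonpos (convex_Ioi a)
    (fun p hp => (hder p hp).continuousAt.continuousWithinAt) ?_ ?_
  · rw [interior_Ioi]
    exact fun p hp => (hder p hp).differentiableAt.differentiableWithinAt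
  · rw [interior_Ioi]
    intro p hp
    rw [(hder p hp).deriv]
    have hp0 : 0 < p := ha.trans_lt hp
    have h1 : 0 ≤ p ^ n / n.factorial * (p * momI u (n + 1) p - (n + 1 : ℕ) * momI u n p) :=
      mul_nonneg (by positivity) (hpos p hp)
    have h2 : ((n + 1 : ℕ) * p ^ n / n.factorial) * momI u n p +
        p ^ (n + 1) / n.factorial * (-momI u (n + 1) p) =
      -(p ^ n / n.factorial * (p * momI u (n + 1) p - (n + 1 : ℕ) * momI u n p)) := by ring
    rw [h2]; linarith

lemma pw_ge {u : ℝ → ℝ} {p : ℝ} (hp : 0 < p)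
    (hpos : ∀ n : ℕ, 0 ≤ p * momI u (n + 1) p - (n + 1 : ℕ) * momI u n p) (n : ℕ) :
    p * momI u 0 p ≤ pw u n p := by
  induction n with
  | zero => simp [pw]
  | succ n ih =>
    refine ih.trans ?_
    have h1 : 0 ≤ p ^ (n + 1) / (n + 1).factorial *
      (p * momI u (n + 1) p - (n + 1 : ℕ) * momI u n p) := mul_nonneg (by positivity) (hpos n)
    have h2 : pw u (n + 1) p - pw u n p = p ^ (n + 1) / (n + 1).factorial *
      (p * momI u (n + 1) p - (n + 1 : ℕ) * momI u n p) := by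
      rw [pw, pw, Nat.factorial_succ]; push_cast; field_simp; ring
    linarith

lemma exists_large {μ : ℝ → ℝ} (hc : ContinuousOn μ (Icc 0 1))
    (hnn : ∀ α ∈ Icc (0:ℝ) 1, 0 ≤ μ α) (h1 : μ 1 ≠ 0) (lam : ℝ) :
    ∃ A : ℝ, 1 ≤ A ∧ ∀ p, A < p → lam < ∫ α in (0:ℝ)..1, p ^ (α - 0) * μ α := by
  have hμ1 : 0 < μ 1 := lt_of_le_of_ne (hnn 1 (by simp)) h1.symm
  obtain ⟨δ, hδ, hd⟩ := Metric.continuousWithinAt_iff.1 (hc 1 (by simp)) (μ 1 / 2) (by positivity)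
  set η : ℝ := min (δ / 2) (1 / 2) with hη
  have hη0 : 0 < η := by positivity
  have hη1 : η ≤ 1 / 2 := min_le_right _ _
  have hη2 : η < δ := (min_le_left _ _).trans_lt (by linarith)
  refine ⟨max 1 ((lam / (η * (μ 1 / 2))) ^ 2), le_max_left _ _, fun p hp => ?_⟩
  have hp1 : 1 < p := (le_max_left _ _).trans_lt hp
  have hp2 : (lam / (η * (μ 1 / 2))) ^ 2 < p := (le_max_right _ _).trans_lt hp
  have hp0 : 0 < p := by linarith
  have hcont : ContinuousOn (fun α : ℝ => p ^ (α - 0) * μ α) (Icc 0 1) := by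
    refine ContinuousOn.mul (Continuous.continuousOn ?_) hc
    exact Continuous.rpow continuous_const (by fun_prop) (fun _ => Or.inl hp0.ne')
  have hII : IntervalIntegrable (fun α : ℝ => p ^ (α - 0) * μ α) volume 0 1 := by
    apply ContinuousOn.intervalIntegrable
    rwa [uIcc_of_le zero_le_one]
  have hII2 : IntervalIntegrable (fun α : ℝ => p ^ (α - 0) * μ α) volume (1 - η) 1 := by
    apply ContinuousOn.intervalIntegrable
    rw [uIcc_of_le (by linarith)]
    exact hcont.mono (Icc_subset_Icc (by linarith) le_rfl)
  have hs : lam / (η * (μ 1 / 2)) < √p := Real.lt_sqrt_of_sq_lt hp2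
  rw [div_lt_iff₀ (by positivity)] at hs
  calc lam < √p * (η * (μ 1 / 2)) := hs
    _ = ∫ α in (1 - η)..1, √p * (μ 1 / 2) := by
      rw [intervalIntegral.integral_const, smul_eq_mul]; ring
    _ ≤ ∫ α in (1 - η)..1, p ^ (α - 0) * μ α := by
      refine intervalIntegral.integral_mono_on (by linarith) (by simp) hII2 fun α hα => ?_
      have hα1 := hα.1
      have hα2 := hα.2
      have h3 : √p ≤ p ^ (α - 0) := by
        rw [Real.sqrt_eq_rpow]
        exact Real.rpow_le_rpow_of_exponent_le hp1.le (by linarith)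
      have h4 : μ 1 / 2 ≤ μ α := by
        have := hd (x := α) ⟨by linarith, hα2⟩ (by rw [Real.dist_eq, abs_lt]; constructor <;> linarith)
        rw [Real.dist_eq, abs_lt] at this
        linarith [this.1]
      gcongr
    _ ≤ _ := by
      refine intervalIntegral.integral_mono_interval (by linarith) (by linarith) le_rfl ?_ hII
      filter_upwards [ae_restrict_mem measurableSet_Ioc] with α hα
      exact mul_nonneg (by positivity) (hnn α ⟨hα.1.le, hα.2⟩)

theorem relaxation_solution_monotone (μ : ℝ → ℝ)
    (hc : ContinuousOn μ (Set.Icc 0 1))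
    (hnn : ∀ α ∈ Set.Icc (0:ℝ) 1, 0 ≤ μ α)
    (hne : ∃ α ∈ Set.Icc (0:ℝ) 1, μ α ≠ 0)
    (hC2 : ContDiffOn ℝ 2 μ (Set.Icc 0 1))
    (h1 : μ 1 ≠ 0)
    (lam : ℝ) (hlam : 0 < lam)
    (u : ℝ → ℝ) (hu : ContinuousOn u (Set.Ici 0))
    (M c : ℝ) (hM : 0 < M) (hcpos : 0 < c)
    (hbound : ∀ t : ℝ, 0 ≤ t → |u t| ≤ M * Real.exp (c * t))
    (hlap : ∃ p₀ : ℝ, ∀ p : ℝ, p₀ ≤ p →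
      ∫ t in Set.Ioi (0:ℝ), Real.exp (-p * t) * u t
        = Kreal μ p / (p * Kreal μ p - lam)) :
    MonotoneOn u (Set.Ici 0) ∧ ∀ t : ℝ, 0 ≤ t → 1 ≤ u t := by
  obtain ⟨p₀, hlap⟩ := hlap
  obtain ⟨A, hA1, hA⟩ := exists_large hc hnn h1 lam
  set a : ℝ := max A (max c p₀) with ha
  have haA : A ≤ a := le_max_left _ _
  have hac : c ≤ a := (le_max_left _ _).trans (le_max_right _ _)
  have hap : p₀ ≤ a := (le_max_right _ _).trans (le_max_right _ _)
  have ha0 : 0 ≤ a := by linarith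
  set F : ℝ → ℝ := fun p => (∫ α in (0:ℝ)..1, p ^ (α - 0) * μ α) - lam with hF
  have hFpos : ∀ p, a < p → 0 < F p := fun p hp => sub_pos.2 (hA p (haA.trans_lt hp))
  have hFK : ∀ p, a < p → p * Kreal μ p - lam = F p := by
    intro p hp
    have hp0 : 0 < p := ha0.trans_lt hp
    simp only [hF, Kreal]
    rw [← intervalIntegral.integral_const_mul]
    congr 2
    ext α
    rw [Real.rpow_sub_one hp0.ne', sub_zero]
    field_simp
  have hFinv := CMon.inv hFpos
    (φ := fun p => ∫ α in (0:ℝ)..1, p ^ (α - (0 + 1)) * ((α - 0) * μ α))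
    (fun p hp => (hasDerivAt_powInt hc 0 (ha0.trans_lt hp)).sub_const lam)
    (fun n => CMon.powInt ha0 n (by fun_prop)
      (fun α hα => mul_nonneg (by linarith [hα.1]) (hnn α hα)) (by norm_num))
  have hG : ∀ n, CMon a n (fun p => 1 + lam * (F p)⁻¹) := fun n =>
    (CMon.const zero_le_one).add ((CMon.const hlam.le).mul (hFinv n))
  have hGe : ∀ p, a < p → 1 + lam * (F p)⁻¹ = p * momI u 0 p := by
    intro p hp
    have h2 := hlap p (hap.trans hp.le)
    have h3 : momI u 0 p = Kreal μ p / F p := by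
      rw [← hFK p hp, ← h2, momI]; simp
    have h4 := (hFpos p hp).ne'
    have h5 := hFK p hp
    rw [h3]
    field_simp
    linarith
  have hJ : ∀ n p, a < p → HasDerivAt (momI u n) (-momI u (n + 1) p) p :=
    fun n p hp => mom_deriv hu hbound n (hac.trans_lt hp)
  have hpos : ∀ (n : ℕ) p, a < p → 0 ≤ p * momI u (n + 1) p - (n + 1 : ℕ) * momI u n p := by
    intro n p hp
    have := chain_nonneg hJ (n + 1) 0 _ (hG (n + 1)) (fun p hp => by simp [hGe p hp]) p hp
    simpa using this
  have hanti := fun n => pw_antitone ha0 hJ n (hpos n)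
  have hev : ∀ t : ℝ, 0 < t → ∀ᶠ n : ℕ in atTop, a < n / t + c := by
    intro t ht
    filter_upwards [eventually_gt_atTop ⌈a * t⌉₊] with n hn
    have : a * t < n := Nat.lt_of_ceil_lt hn
    have : a < n / t := by rwa [lt_div_iff₀ ht]
    linarith
  have hmono : MonotoneOn u (Ioi 0) := by
    intro s hs t ht hst
    have hs0 : 0 < s := hs
    have ht0 : 0 < t := ht
    refine le_of_tendsto_of_tendsto (pw_tendsto hu hM hcpos hbound hs)
      (pw_tendsto hu hM hcpos hbound ht) ?_
    filter_upwards [hev s hs, hev t ht] with n h2 h3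
    refine hanti n h3 h2 ?_
    gcongr
  have hone : ∀ t : ℝ, 0 < t → 1 ≤ u t := by
    intro t ht
    refine ge_of_tendsto (pw_tendsto hu hM hcpos hbound ht) ?_
    filter_upwards [hev t ht] with n hn
    refine le_trans ?_ (pw_ge (ha0.trans_lt hn) (fun n => hpos n _ hn) n)
    rw [← hGe _ hn]
    have := inv_pos.2 (hFpos _ hn)
    nlinarith [mul_pos hlam this]
  have h0 : ContinuousWithinAt u (Ioi 0) 0 := (hu 0 (by simp)).mono Ioi_subset_Ici_self
  constructor
  · have := hmono.insert_of_continuousWithinAt (x := 0)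
      (by
        have : (nhdsWithin (0:ℝ) (Ioi 0)).NeBot := inferInstance
        exact this) h0
    rwa [Ioi_insert] at this
  · intro t ht
    rcases ht.eq_or_lt with h | h
    · subst h
      exact ge_of_tendsto h0 (by filter_upwards [self_mem_nhdsWithin] with s hs using hone s hs)
    · exact hone t h
end

section
/- Let μ be a continuous non-negative function on [0,1], not identically zero, twice continuously differentiable, with μ(1) ≠ 0, and let λ < 0. Suppose u : (0,∞) → ℝ is continuous and locally integrable, and its Laplace transform converges absolutely and satisfies ∫₀^∞ e^{−pt} u(t) dt = K(p)/(p K(p) − λ) for all real p > 0 (note p K(p) − λ > 0 for p > 0 since λ < 0). Then u is completely monotone on (0,∞). -/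
open MeasureTheory Filter Set

/-- A function `f` is completely monotone on `(0,∞)` if it is infinitely
differentiable there and `(-1)^n f⁽ⁿ⁾(t) ≥ 0` for all `t > 0` and `n ≥ 0`. -/
def CompletelyMonotoneOn (f : ℝ → ℝ) : Prop :=
  ContDiffOn ℝ (⊤ : ℕ∞) f (Set.Ioi 0) ∧
  ∀ n : ℕ, ∀ t : ℝ, 0 < t →
    0 ≤ (-1 : ℝ) ^ n * iteratedDerivWithin n f (Set.Ioi 0) t

/-- Integrals of functions valued in a closed convex cone stay in the cone. -/
lemma cone_integral_mem {X E : Type*} [MeasurableSpace X] (ν : Measure X)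
    [NormedAddCommGroup E] [NormedSpace ℝ E] [CompleteSpace E] (s : Set E)
    (hconv : Convex ℝ s) (hcl : IsClosed s) (h0 : (0 : E) ∈ s)
    (hsm : ∀ a : ℝ, 0 ≤ a → ∀ x ∈ s, a • x ∈ s) (f : X → E)
    (hf : Integrable f ν) (hfs : ∀ᵐ x ∂ν, f x ∈ s) : ∫ x, f x ∂ν ∈ s := by
  by_contra hx
  obtain ⟨L, b, hb, hs⟩ := geometric_hahn_banach_point_closed hconv hcl hx
  have hb0 : b < 0 := by simpa using hs 0 h0
  have hpos : ∀ y ∈ s, 0 ≤ L y := by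
    intro y hy
    by_contra hlt
    push Not at hlt
    have := hs _ (hsm (b / L y) (div_nonneg_of_nonpos hb0.le hlt.le) y hy)
    rw [map_smul, smul_eq_mul, div_mul_cancel₀ _ hlt.ne] at this
    exact lt_irrefl _ this
  rw [← L.integral_comp_comm hf] at hb
  have : 0 ≤ ∫ x, L (f x) ∂ν := integral_nonneg_of_ae (hfs.mono fun x hx => hpos _ hx)
  linarith

/-- Finite Stieltjes sums sampled at `1, …, N`. -/
def stCone (N : ℕ) : Set (Fin N → ℝ) :=
  {v | ∃ (ι : Type) (_ : Fintype ι) (a r : ι → ℝ), (∀ j, 0 ≤ a j) ∧ (∀ j, 0 ≤ r j) ∧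
    v = fun i : Fin N => ∑ j, a j / (((i : ℕ) : ℝ) + 1 + r j)}

lemma stCone_zero (N : ℕ) : (0 : Fin N → ℝ) ∈ stCone N :=
  ⟨Fin 0, inferInstance, 0, 0, by simp, by simp, by ext; simp⟩

lemma stCone_add (N : ℕ) {v w : Fin N → ℝ} (hv : v ∈ stCone N) (hw : w ∈ stCone N) :
    v + w ∈ stCone N := by
  obtain ⟨ι, _, a, r, ha, hr, rfl⟩ := hv
  obtain ⟨κ, _, b, s, hb, hs, rfl⟩ := hw
  refine ⟨ι ⊕ κ, inferInstance, Sum.elim a b, Sum.elim r s, ?_, ?_, ?_⟩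
  · rintro (j | j) <;> simp [ha, hb]
  · rintro (j | j) <;> simp [hr, hs]
  · ext i; simp

lemma stCone_smul (N : ℕ) {v : Fin N → ℝ} (c : ℝ) (hc : 0 ≤ c) (hv : v ∈ stCone N) :
    c • v ∈ stCone N := by
  obtain ⟨ι, _, a, r, ha, hr, rfl⟩ := hv
  refine ⟨ι, inferInstance, fun j => c * a j, r, fun j => mul_nonneg hc (ha j), hr, ?_⟩
  ext i; simp [Finset.mul_sum, mul_div_assoc]

lemma stCone_convex (N : ℕ) : Convex ℝ (stCone N) := by
  intro v hv w hw a b ha hb _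
  exact stCone_add N (stCone_smul N a ha hv) (stCone_smul N b hb hw)

lemma clCone_smul (N : ℕ) (c : ℝ) (hc : 0 ≤ c) (v : Fin N → ℝ) (hv : v ∈ closure (stCone N)) :
    c • v ∈ closure (stCone N) :=
  map_mem_closure (continuous_const_smul c) hv fun _ hx => stCone_smul N c hc hx

lemma rpow_mem (N : ℕ) (α : ℝ) (hα : α ∈ Ioo (0:ℝ) 1) :
    (fun i : Fin N => (((i : ℕ) : ℝ) + 1) ^ (α - 1)) ∈ closure (stCone N) := by
  obtain ⟨ν, hν⟩ := Real.exists_measure_rpow_eq_integral_rpowIntegrand₀₁ hα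
  have key : (fun i : Fin N => (((i : ℕ) : ℝ) + 1) ^ (α - 1)) =
      ∫ t in Ioi 0, (fun i : Fin N => Real.rpowIntegrand₀₁ α t (((i : ℕ) : ℝ) + 1) / (((i : ℕ) : ℝ) + 1)) ∂ν := by
    ext i
    rw [eval_integral]
    · have hi : (0:ℝ) < ((i : ℕ) : ℝ) + 1 := by positivity
      rw [integral_div, ← (hν _ hi.le).2, Real.rpow_sub_one hi.ne']
    · intro j
      exact (hν (((j : ℕ) : ℝ) + 1) (mem_Ici.2 (by positivity))).1.div_const _
  rw [key]
  apply cone_integral_mem _ _ (stCone_convex N).closure isClosed_closure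
    (subset_closure (stCone_zero N)) (fun c hc x hx => clCone_smul N c hc x hx)
  · exact Integrable.of_eval fun j => (hν (((j : ℕ) : ℝ) + 1) (mem_Ici.2 (by positivity))).1.div_const _
  · refine (ae_restrict_mem measurableSet_Ioi).mono fun t ht => subset_closure ?_
    have ht : 0 < t := ht
    refine ⟨Unit, inferInstance, fun _ => t ^ (α - 1), fun _ => t, fun _ => by positivity,
      fun _ => ht.le, ?_⟩
    ext i
    have hi : (0:ℝ) < ((i : ℕ) : ℝ) + 1 := by positivity
    rw [Real.rpowIntegrand₀₁_eq_pow_div hα ht.le hi.le]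
    simp
    field_simp
    ring

lemma K_mem (N : ℕ) (μ : ℝ → ℝ) (hc : ContinuousOn μ (Set.Icc 0 1))
    (hnn : ∀ α ∈ Set.Icc (0:ℝ) 1, 0 ≤ μ α) :
    (fun i : Fin N => Kreal μ (((i : ℕ) : ℝ) + 1)) ∈ closure (stCone N) := by
  have hIntg : ∀ i : Fin N, IntegrableOn (fun α : ℝ => (((i : ℕ) : ℝ) + 1) ^ (α - 1) * μ α) (Ioc 0 1) := by
    intro i
    refine IntegrableOn.mono_set (t := Icc 0 1) ?_ Ioc_subset_Icc_self
    apply ContinuousOn.integrableOn_Icc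
    refine ContinuousOn.mul ?_ hc
    refine Continuous.continuousOn ?_
    exact Continuous.rpow continuous_const (by fun_prop) (fun x => Or.inl (by positivity))
  have key : (fun i : Fin N => Kreal μ (((i : ℕ) : ℝ) + 1)) =
      ∫ α in Ioc (0:ℝ) 1, (fun i : Fin N => (((i : ℕ) : ℝ) + 1) ^ (α - 1) * μ α) := by
    ext i
    rw [eval_integral hIntg, Kreal, intervalIntegral.integral_of_le zero_le_one]
  rw [key, integral_Ioc_eq_integral_Ioo]
  apply cone_integral_mem _ _ (stCone_convex N).closure isClosed_closure
    (subset_closure (stCone_zero N)) (fun c hc x hx => clCone_smul N c hc x hx)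
  · exact Integrable.of_eval fun j => (hIntg j).mono_set Ioo_subset_Ioc_self
  · refine (ae_restrict_mem measurableSet_Ioo).mono fun α hα => ?_
    have := clCone_smul N (μ α) (hnn α ⟨hα.1.le, hα.2.le⟩) _ (rpow_mem N α hα)
    convert this using 1
    ext i; simp [mul_comm]

/-- Simultaneous diagonalization gives partial fractions with nonnegative residues. -/
lemma partial_fractions {ι : Type} [Fintype ι] (a r : ι → ℝ) (ha : ∀ j, 0 ≤ a j)
    (hr : ∀ j, 0 ≤ r j) (c : ℝ) (hc : 0 < c) :
    ∃ (b s : ι → ℝ), (∀ j, 0 ≤ b j) ∧ (∀ j, 0 ≤ s j) ∧ ∀ p : ℝ, 0 < p →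
      (∑ j, a j / (p + r j)) / (p * (∑ j, a j / (p + r j)) + c) = ∑ j, b j / (p + s j) := by
  classical
  set w : ι → ℝ := fun j => Real.sqrt (a j) with hw
  have hww : ∀ j, w j * w j = a j := fun j => Real.mul_self_sqrt (ha j)
  set B : Matrix ι ι ℝ := 1 + c⁻¹ • Matrix.vecMulVec w w with hB
  have hBpd : B.PosDef := by
    refine Matrix.PosDef.add_posSemidef Matrix.PosDef.one ?_
    refine Matrix.PosSemidef.smul ?_ (by positivity)
    simpa using Matrix.posSemidef_vecMulVec_self_star w
  obtain ⟨C, hC, hBC⟩ : ∃ C : Matrix ι ι ℝ, IsUnit C ∧ B = C.transpose * C := by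
    open scoped MatrixOrder in
    obtain ⟨C, hC⟩ := CStarAlgebra.nonneg_iff_eq_star_mul_self.mp hBpd.posSemidef.nonneg
    have hC' : B = C.transpose * C := by
      rw [hC, Matrix.star_eq_conjTranspose, Matrix.conjTranspose_eq_transpose_of_trivial]
    refine ⟨C, ?_, hC'⟩
    have hu := hBpd.isUnit
    rw [Matrix.isUnit_iff_isUnit_det] at hu ⊢
    rw [hC', Matrix.det_mul] at hu
    exact isUnit_of_mul_isUnit_right hu
  have hCdet : IsUnit C.det := (Matrix.isUnit_iff_isUnit_det C).1 hC
  set A : Matrix ι ι ℝ := (C⁻¹).conjTranspose * Matrix.diagonal r * C⁻¹ with hA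
  have hApsd : A.PosSemidef := by
    apply Matrix.PosSemidef.conjTranspose_mul_mul_same
    exact Matrix.PosSemidef.diagonal hr
  obtain ⟨Q, s, hs, hQ1, hQ2, hQ3⟩ : ∃ (Q : Matrix ι ι ℝ) (s : ι → ℝ), (∀ j, 0 ≤ s j) ∧ IsUnit Q.det ∧
      Q.transpose * B * Q = 1 ∧ Q.transpose * Matrix.diagonal r * Q = Matrix.diagonal s := by
    set U : Matrix ι ι ℝ := (hApsd.1.eigenvectorUnitary : Matrix ι ι ℝ) with hU
    have hU1 : U.transpose * U = 1 := by
      have := Unitary.coe_star_mul_self hApsd.1.eigenvectorUnitary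
      rwa [Matrix.star_eq_conjTranspose, Matrix.conjTranspose_eq_transpose_of_trivial] at this
    have hsp : U.transpose * A * U = Matrix.diagonal hApsd.1.eigenvalues := by
      have := hApsd.1.spectral_theorem
      rw [Unitary.conjStarAlgAut_apply, Matrix.star_eq_conjTranspose,
        Matrix.conjTranspose_eq_transpose_of_trivial, ← hU] at this
      generalize hApsd.1.eigenvalues = e at this ⊢
      clear_value U
      rw [this]
      simp only [Matrix.mul_assoc]
      rw [hU1, ← Matrix.mul_assoc, hU1]
      simp
    refine ⟨C⁻¹ * U, hApsd.1.eigenvalues, hApsd.eigenvalues_nonneg, ?_, ?_, ?_⟩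
    · rw [Matrix.det_mul]
      refine IsUnit.mul (Matrix.isUnit_nonsing_inv_det _ hCdet) ?_
      have := congrArg Matrix.det hU1
      rw [Matrix.det_mul, Matrix.det_one] at this
      exact IsUnit.of_mul_eq_one_right _ this
    · have h1 : C.transpose * C = C.transpose * C := rfl
      rw [hBC, Matrix.transpose_mul]
      calc U.transpose * C⁻¹.transpose * (C.transpose * C) * (C⁻¹ * U)
          = U.transpose * (C⁻¹.transpose * C.transpose) * ((C * C⁻¹) * U) := by
            simp only [Matrix.mul_assoc]
        _ = 1 := by
            rw [← Matrix.transpose_mul, Matrix.mul_nonsing_inv _ hCdet]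
            simpa using hU1
    · rw [← hsp, hA, Matrix.transpose_mul, Matrix.conjTranspose_eq_transpose_of_trivial]
      simp only [Matrix.mul_assoc]
  refine ⟨fun j => (Q.transpose.mulVec w j) ^ 2 / c, s, fun j => by positivity, hs, ?_⟩
  intro p hp
  set S := ∑ j, a j / (p + r j) with hS
  have hS0 : 0 ≤ S := Finset.sum_nonneg fun j _ => div_nonneg (ha j) (by linarith [hr j])
  have hden : 0 < p * S + c := by positivity
  set x : ι → ℝ := fun j => w j / (p + r j) * (c / (p * S + c)) with hx
  have hwx : w ⬝ᵥ x = S * (c / (p * S + c)) := by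
    rw [dotProduct, hS, Finset.sum_mul]
    refine Finset.sum_congr rfl fun j _ => ?_
    rw [hx, ← hww j]; ring
  have heq : (p • B + Matrix.diagonal r).mulVec x = w := by
    ext j
    have hj : 0 < p + r j := by linarith [hr j]
    simp only [hB, Matrix.add_mulVec, Matrix.smul_mulVec, Matrix.one_mulVec,
      Matrix.vecMulVec_mulVec, hwx, Matrix.mulVec_diagonal, Pi.add_apply, Pi.smul_apply, smul_eq_mul,
      MulOpposite.smul_eq_mul_unop, MulOpposite.unop_op]
    rw [show x j = w j / (p + r j) * (c / (p * S + c)) from rfl]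
    field_simp
    ring
  set y := Q⁻¹.mulVec x with hy
  have hQy : Q.mulVec y = x := by
    rw [hy, Matrix.mulVec_mulVec, Matrix.mul_nonsing_inv _ hQ1, Matrix.one_mulVec]
  have hmat : Q.transpose * (p • B + Matrix.diagonal r) * Q = p • 1 + Matrix.diagonal s := by
    rw [Matrix.mul_add, Matrix.add_mul, hQ3, Matrix.mul_smul, Matrix.smul_mul, hQ2]
  have hyj : ∀ j, Q.transpose.mulVec w j = (p + s j) * y j := by
    intro j
    have : Q.transpose.mulVec w = (p • (1 : Matrix ι ι ℝ) + Matrix.diagonal s).mulVec y := by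
      rw [← hmat, ← Matrix.mulVec_mulVec, hQy, ← Matrix.mulVec_mulVec, heq]
    rw [this]
    simp only [Matrix.add_mulVec, Matrix.smul_mulVec, Matrix.one_mulVec, Matrix.mulVec_diagonal,
      Pi.add_apply, Pi.smul_apply, smul_eq_mul]
    ring
  have hfin : w ⬝ᵥ x = ∑ j, (Q.transpose.mulVec w j) ^ 2 / (p + s j) := by
    rw [← hQy, Matrix.dotProduct_mulVec, ← Matrix.mulVec_transpose, dotProduct]
    refine Finset.sum_congr rfl fun j _ => ?_
    have hj : 0 < p + s j := by linarith [hs j]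
    rw [hyj j]; field_simp
  have : S / (p * S + c) = (w ⬝ᵥ x) / c := by rw [hwx]; field_simp
  rw [this, hfin, Finset.sum_div]
  refine Finset.sum_congr rfl fun j _ => ?_
  rw [div_right_comm]
lemma exp_bound (k : ℕ) (s t : ℝ) (hs : 0 ≤ s) (ht : 0 < t) :
    s ^ k * Real.exp (-s * t) ≤ k.factorial / t ^ k := by
  have h := Real.pow_div_factorial_le_exp (s * t) (mul_nonneg hs ht.le) k
  rw [neg_mul, Real.exp_neg, ← div_eq_mul_inv, div_le_div_iff₀ (Real.exp_pos _) (by positivity)]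
  rw [div_le_iff₀ (by positivity), mul_pow] at h
  linarith

lemma exp_taylor (s x t a : ℝ) (hs : 0 ≤ s) (hx : a ≤ x) (ht : a ≤ t) :
    |Real.exp (-s * x) - Real.exp (-s * t) + s * (x - t) * Real.exp (-s * t)| ≤
      s ^ 2 * (x - t) ^ 2 * Real.exp (-s * a) := by
  set h := -s * (x - t) with hh
  have e1 : Real.exp (-s * x) = Real.exp (-s * t) * Real.exp h := by
    rw [← Real.exp_add]; congr 1; rw [hh]; ring
  have e2 : Real.exp (-s * t) ≤ Real.exp (-s * a) := Real.exp_le_exp.2 (by nlinarith)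
  have e3 : Real.exp (-s * x) ≤ Real.exp (-s * a) := Real.exp_le_exp.2 (by nlinarith)
  have p1 := Real.exp_pos (-s * t)
  have pa := Real.exp_pos (-s * a)
  have q1 := Real.add_one_le_exp h
  have q2 := Real.add_one_le_exp (-h)
  have q3 : Real.exp h * Real.exp (-h) = 1 := by rw [← Real.exp_add]; simp
  have ph := Real.exp_pos h
  have e4 : Real.exp (-s * x) - Real.exp (-s * t) + s * (x - t) * Real.exp (-s * t) =
      Real.exp (-s * t) * (Real.exp h - 1 - h) := by rw [e1, hh]; ring
  have e5 : s ^ 2 * (x - t) ^ 2 = h ^ 2 := by rw [hh]; ring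
  rw [e4, e5, abs_of_nonneg (mul_nonneg p1.le (by linarith))]
  rcases le_total h 0 with h0 | h0
  · have : Real.exp h - 1 - h ≤ h ^ 2 := by
      have : Real.exp h * (1 - h) ≤ 1 := by nlinarith
      nlinarith
    calc _ ≤ Real.exp (-s * t) * h ^ 2 := by gcongr
      _ ≤ Real.exp (-s * a) * h ^ 2 := by gcongr
      _ = _ := mul_comm _ _
  · have : Real.exp h - 1 - h ≤ Real.exp h * h ^ 2 := by
      have : 1 - h ^ 2 ≤ (1 + h) * Real.exp (-h) := by nlinarith
      have : Real.exp h * (1 - h ^ 2) ≤ Real.exp h * ((1 + h) * Real.exp (-h)) := by gcongr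
      nlinarith
    calc _ ≤ Real.exp (-s * t) * (Real.exp h * h ^ 2) := by gcongr
      _ = Real.exp (-s * x) * h ^ 2 := by rw [e1]; ring
      _ ≤ Real.exp (-s * a) * h ^ 2 := by gcongr
      _ = _ := mul_comm _ _

/-- `k`-th derivative of an exponential sum. -/
noncomputable def esum {ι : Type} [Fintype ι] (b s : ι → ℝ) (k : ℕ) (t : ℝ) : ℝ :=
  ∑ j, b j * ((-s j) ^ k * Real.exp (-s j * t))

lemma sum_bound {ι : Type} [Fintype ι] (b f : ι → ℝ) (hb : ∀ j, 0 ≤ b j) (hb1 : ∑ j, b j ≤ 1)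
    (M : ℝ) (hM : 0 ≤ M) (hf : ∀ j, |f j| ≤ M) : |∑ j, b j * f j| ≤ M := by
  calc |∑ j, b j * f j| ≤ ∑ j, |b j * f j| := Finset.abs_sum_le_sum_abs _ _
    _ ≤ ∑ j, b j * M := by
        refine Finset.sum_le_sum fun j _ => ?_
        rw [abs_mul, abs_of_nonneg (hb j)]
        exact mul_le_mul_of_nonneg_left (hf j) (hb j)
    _ = (∑ j, b j) * M := by rw [Finset.sum_mul]
    _ ≤ 1 * M := by gcongr
    _ = M := one_mul M

section
variable {ι : Type} [Fintype ι] (b s : ι → ℝ)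

lemma esum_bound (hb : ∀ j, 0 ≤ b j) (hs : ∀ j, 0 ≤ s j) (hb1 : ∑ j, b j ≤ 1)
    (k : ℕ) (t : ℝ) (ht : 0 < t) : |esum b s k t| ≤ k.factorial / t ^ k := by
  refine sum_bound b _ hb hb1 _ (by positivity) fun j => ?_
  rw [abs_mul, abs_pow, abs_neg, abs_of_nonneg (hs j), Real.abs_exp]
  exact exp_bound k _ _ (hs j) ht

lemma esum_taylor (hb : ∀ j, 0 ≤ b j) (hs : ∀ j, 0 ≤ s j) (hb1 : ∑ j, b j ≤ 1)
    (k : ℕ) (a x t : ℝ) (ha : 0 < a) (hx : a ≤ x) (ht : a ≤ t) :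
    |esum b s k x - esum b s k t - (x - t) * esum b s (k + 1) t| ≤
      (k + 2).factorial / a ^ (k + 2) * (x - t) ^ 2 := by
  have : esum b s k x - esum b s k t - (x - t) * esum b s (k + 1) t =
      ∑ j, b j * ((-s j) ^ k * (Real.exp (-s j * x) - Real.exp (-s j * t) +
        s j * (x - t) * Real.exp (-s j * t))) := by
    simp only [esum, Finset.mul_sum, ← Finset.sum_sub_distrib]
    refine Finset.sum_congr rfl fun j _ => ?_
    ring
  rw [this]
  refine sum_bound b _ hb hb1 _ (by positivity) fun j => ?_
  rw [abs_mul, abs_pow, abs_neg, abs_of_nonneg (hs j)]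
  have h1 := exp_taylor (s j) x t a (hs j) hx ht
  have h2 := exp_bound (k + 2) (s j) a (hs j) ha
  have h3 : 0 ≤ s j ^ k := pow_nonneg (hs j) k
  calc _ ≤ s j ^ k * (s j ^ 2 * (x - t) ^ 2 * Real.exp (-s j * a)) := by gcongr
    _ = (s j ^ (k + 2) * Real.exp (-s j * a)) * (x - t) ^ 2 := by ring
    _ ≤ _ := by gcongr

lemma esum_sign (hb : ∀ j, 0 ≤ b j) (hs : ∀ j, 0 ≤ s j) (k : ℕ) (t : ℝ) :
    0 ≤ (-1 : ℝ) ^ k * esum b s k t := by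
  rw [esum, Finset.mul_sum]
  refine Finset.sum_nonneg fun j _ => ?_
  have : (-1 : ℝ) ^ k * (b j * ((-s j) ^ k * Real.exp (-s j * t))) =
      b j * (s j ^ k * Real.exp (-s j * t)) := by
    rw [neg_pow (s j) k]
    have : (-1 : ℝ) ^ k * (-1 : ℝ) ^ k = 1 := by rw [← mul_pow]; simp
    linear_combination (b j * (s j ^ k * Real.exp (-s j * t))) * this
  rw [this]
  exact mul_nonneg (hb j) (mul_nonneg (pow_nonneg (hs j) k) (Real.exp_pos _).le)

lemma esum_lip (hb : ∀ j, 0 ≤ b j) (hs : ∀ j, 0 ≤ s j) (hb1 : ∑ j, b j ≤ 1)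
    (a x t : ℝ) (ha : 0 < a) (hx : a ≤ x) (ht : a ≤ t) :
    |esum b s 0 x - esum b s 0 t| ≤ (1 / a + 2 / a ^ 2 * |x - t|) * |x - t| := by
  have h1 := esum_taylor b s hb hs hb1 0 a x t ha hx ht
  have h2 := esum_bound b s hb hs hb1 1 t (by linarith)
  have h3 : (1 : ℝ) / t ≤ 1 / a := one_div_le_one_div_of_le ha ht
  simp only [zero_add, Nat.factorial, Nat.cast_one, pow_one, mul_one] at h1 h2
  have h4 : |(x - t) * esum b s 1 t| ≤ 1 / a * |x - t| := by
    rw [abs_mul, mul_comm]; gcongr; exact h2.trans h3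
  have h5 := abs_add_le (esum b s 0 x - esum b s 0 t - (x - t) * esum b s 1 t)
    ((x - t) * esum b s 1 t)
  rw [sub_add_cancel] at h5
  have h6 : (x - t) ^ 2 = |x - t| * |x - t| := by rw [← sq, sq_abs]
  rw [h6] at h1
  push_cast at h1
  linarith
end

/-- A pointwise limit of sub-probability exponential sums is completely monotone. -/
lemma cm_of_limit (ι : ℕ → Type) [∀ n, Fintype (ι n)] (b s : ∀ n, ι n → ℝ)
    (hb : ∀ n j, 0 ≤ b n j) (hs : ∀ n j, 0 ≤ s n j) (hb1 : ∀ n, ∑ j, b n j ≤ 1)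
    (u : ℝ → ℝ) (hu : ∀ t, 0 < t → Tendsto (fun n => esum (b n) (s n) 0 t) atTop (nhds (u t))) :
    CompletelyMonotoneOn u := by
  have hex : ∀ k : ℕ, ∀ t : ℝ, ∃ l : ℝ, 0 < t →
      Tendsto (fun n => esum (b n) (s n) k t) (hyperfilter ℕ : Filter ℕ) (nhds l) := by
    intro k t
    by_cases ht : 0 < t
    · have hc : IsCompact (Icc (-(k.factorial / t ^ k)) (k.factorial / t ^ k : ℝ)) := isCompact_Icc
      obtain ⟨l, -, hl⟩ := hc.ultrafilter_le_nhds'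
        ((hyperfilter ℕ).map (fun n => esum (b n) (s n) k t)) (by
          rw [Ultrafilter.mem_map]
          refine univ_mem' fun n => ?_
          exact abs_le.1 (esum_bound (b n) (s n) (hb n) (hs n) (hb1 n) k t ht))
      exact ⟨l, fun _ => hl⟩
    · exact ⟨0, fun h => absurd h ht⟩
  choose v hv using hex
  have hder : ∀ k t, 0 < t → HasDerivAt (v k) (v (k + 1) t) t := by
    intro k t ht
    have hbd : ∀ x, t / 2 < x → |v k x - v k t - (x - t) * v (k + 1) t| ≤
        (k + 2).factorial / (t / 2) ^ (k + 2) * (x - t) ^ 2 := by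
      intro x hx
      have hx0 : 0 < x := by linarith
      refine le_of_tendsto (((hv k x hx0).sub (hv k t ht)).sub
        ((hv (k + 1) t ht).const_mul (x - t))).abs (Eventually.of_forall fun n => ?_)
      exact esum_taylor (b n) (s n) (hb n) (hs n) (hb1 n) k (t / 2) x t (by linarith) hx.le
        (by linarith)
    rw [hasDerivAt_iff_isLittleO]
    have h1 : (fun x => v k x - v k t - (x - t) • v (k + 1) t) =O[nhds t]
        (fun x => ‖x - t‖ ^ 2) := by
      refine Asymptotics.IsBigO.of_bound ((k + 2).factorial / (t / 2) ^ (k + 2)) ?_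
      filter_upwards [Ioi_mem_nhds (show t / 2 < t by linarith)] with x hx
      have := hbd x hx
      simpa using this
    exact h1.trans_isLittleO (Asymptotics.isLittleO_pow_sub_sub t (by norm_num))
  have hu0 : EqOn u (v 0) (Ioi 0) := fun t ht =>
    tendsto_nhds_unique ((hu t ht).mono_left Nat.hyperfilter_le_atTop) (hv 0 t ht)
  have hit : ∀ k, EqOn (iteratedDerivWithin k u (Ioi 0)) (v k) (Ioi 0) := by
    intro k
    induction k with
    | zero => intro t ht; simpa using hu0 ht
    | succ k ih =>
      intro t ht
      rw [iteratedDerivWithin_succ, derivWithin_congr ih (ih ht)]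
      exact ((hder k t ht).hasDerivWithinAt).derivWithin (uniqueDiffOn_Ioi 0 t ht)
  refine ⟨?_, fun k t ht => ?_⟩
  · refine contDiffOn_of_differentiableOn_deriv fun k _ => ?_
    refine DifferentiableOn.congr (fun t ht => ?_) (hit k)
    exact (hder k t ht).differentiableAt.differentiableWithinAt
  · rw [hit k ht]
    exact ge_of_tendsto ((hv k t ht).const_mul ((-1 : ℝ) ^ k))
      (Eventually.of_forall fun n => esum_sign _ _ (hb n) (hs n) k t)
lemma mass_le {ι : Type} [Fintype ι] (b s : ι → ℝ)
    (h : ∀ p : ℝ, 0 < p → p * ∑ j, b j / (p + s j) ≤ 1) : ∑ j, b j ≤ 1 := by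
  have ht : Tendsto (fun p : ℝ => p * ∑ j, b j / (p + s j)) atTop (nhds (∑ j, b j)) := by
    simp only [Finset.mul_sum]
    refine tendsto_finsetSum _ fun j _ => ?_
    have h1 : Tendsto (fun p : ℝ => b j - b j * s j / (p + s j)) atTop (nhds (b j - 0)) := by
      refine tendsto_const_nhds.sub (Tendsto.div_atTop tendsto_const_nhds ?_)
      exact tendsto_atTop_add_const_right _ _ tendsto_id
    rw [sub_zero] at h1
    refine h1.congr' ?_
    filter_upwards [eventually_gt_atTop (-s j)] with p hp
    have : p + s j ≠ 0 := by linarith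
    field_simp
    ring
  exact le_of_tendsto ht ((eventually_gt_atTop 0).mono fun p hp => h p hp)

lemma Kreal_nonneg (μ : ℝ → ℝ) (hnn : ∀ α ∈ Set.Icc (0:ℝ) 1, 0 ≤ μ α) (p : ℝ) (hp : 0 < p) :
    0 ≤ Kreal μ p := by
  refine intervalIntegral.integral_nonneg zero_le_one fun α hα => ?_
  exact mul_nonneg (Real.rpow_nonneg hp.le _) (hnn α hα)

lemma approx (μ : ℝ → ℝ) (hc : ContinuousOn μ (Set.Icc 0 1))
    (hnn : ∀ α ∈ Set.Icc (0:ℝ) 1, 0 ≤ μ α) (lam : ℝ) (hlam : lam < 0) (N : ℕ) :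
    ∃ (ι : Type) (_ : Fintype ι) (b s : ι → ℝ), (∀ j, 0 ≤ b j) ∧ (∀ j, 0 ≤ s j) ∧
      ∑ j, b j ≤ 1 ∧ ∀ k : ℕ, k < N → |∑ j, b j / ((k : ℝ) + 1 + s j) -
        Kreal μ ((k : ℝ) + 1) / (((k : ℝ) + 1) * Kreal μ ((k : ℝ) + 1) - lam)| < 1 / ((N : ℝ) + 1) := by
  have hK := K_mem N μ hc hnn
  set Φ : (Fin N → ℝ) → (Fin N → ℝ) := fun v i => v i / ((((i : ℕ) : ℝ) + 1) * v i + (-lam)) with hΦ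
  have hcont : ContinuousAt Φ (fun i : Fin N => Kreal μ (((i : ℕ) : ℝ) + 1)) := by
    rw [continuousAt_pi]
    intro i
    have h0 := Kreal_nonneg μ hnn (((i : ℕ) : ℝ) + 1) (by positivity)
    have : (((i : ℕ) : ℝ) + 1) * Kreal μ (((i : ℕ) : ℝ) + 1) + (-lam) ≠ 0 := by
      have : 0 ≤ (((i : ℕ) : ℝ) + 1) * Kreal μ (((i : ℕ) : ℝ) + 1) := by positivity
      linarith
    have hi : ContinuousAt (fun v : Fin N → ℝ => v i)
      (fun i : Fin N => Kreal μ (((i : ℕ) : ℝ) + 1)) := (continuous_apply i).continuousAt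
    exact hi.div ((continuousAt_const.mul hi).add continuousAt_const) this
  have hcl := mem_closure_image hcont hK
  rw [Metric.mem_closure_iff] at hcl
  obtain ⟨_, ⟨v, hv, rfl⟩, hd⟩ := hcl (1 / ((N : ℝ) + 1)) (by positivity)
  obtain ⟨ι, _, a, r, ha, hr, rfl⟩ := hv
  obtain ⟨b, s, hb, hs, hF⟩ := partial_fractions a r ha hr (-lam) (by linarith)
  refine ⟨ι, inferInstance, b, s, hb, hs, mass_le b s fun p hp => ?_, fun k hk => ?_⟩
  · rw [← hF p hp]
    have hS0 : 0 ≤ ∑ j, a j / (p + r j) :=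
      Finset.sum_nonneg fun j _ => div_nonneg (ha j) (by linarith [hr j])
    have : 0 ≤ p * ∑ j, a j / (p + r j) := by positivity
    rw [← mul_div_assoc, div_le_one (by linarith)]
    linarith
  · have := (dist_pi_lt_iff (by positivity)).1 hd ⟨k, hk⟩
    rw [dist_comm, Real.dist_eq] at this
    simp only [hΦ] at this
    rw [hF _ (by positivity)] at this
    simpa [sub_eq_add_neg] using this

lemma exp_int (p s : ℝ) (hp : 0 < p) (hs : 0 ≤ s) :
    IntegrableOn (fun t : ℝ => Real.exp (-p * t) * Real.exp (-s * t)) (Ioi 0) ∧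
    ∫ t in Ioi (0:ℝ), Real.exp (-p * t) * Real.exp (-s * t) = 1 / (p + s) := by
  have h : ∀ t : ℝ, Real.exp (-p * t) * Real.exp (-s * t) = Real.exp (-(p + s) * t) := by
    intro t; rw [← Real.exp_add]; congr 1; ring
  simp only [h]
  have hn : -(p + s) < 0 := by linarith
  refine ⟨integrableOn_exp_mul_Ioi hn 0, ?_⟩
  rw [integral_exp_mul_Ioi hn]
  rw [mul_zero, Real.exp_zero, neg_div_neg_eq]

lemma esum_laplace {ι : Type} [Fintype ι] (b s : ι → ℝ) (hs : ∀ j, 0 ≤ s j) (p : ℝ) (hp : 0 < p) :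
    IntegrableOn (fun t : ℝ => Real.exp (-p * t) * esum b s 0 t) (Ioi 0) ∧
    ∫ t in Ioi (0:ℝ), Real.exp (-p * t) * esum b s 0 t = ∑ j, b j / (p + s j) := by
  have h : ∀ t : ℝ, Real.exp (-p * t) * esum b s 0 t =
      ∑ j, b j * (Real.exp (-p * t) * Real.exp (-s j * t)) := by
    intro t
    rw [esum, Finset.mul_sum]
    refine Finset.sum_congr rfl fun j _ => ?_
    ring
  simp only [h]
  have hi : ∀ j ∈ Finset.univ, Integrable (fun t : ℝ => b j * (Real.exp (-p * t) * Real.exp (-s j * t)))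
    (volume.restrict (Ioi 0)) := fun j _ => (exp_int p (s j) hp (hs j)).1.const_mul _
  refine ⟨integrable_finsetSum _ hi, ?_⟩
  rw [integral_finsetSum _ hi]
  refine Finset.sum_congr rfl fun j _ => ?_
  rw [integral_const_mul, (exp_int p (s j) hp (hs j)).2, mul_one_div]

/-- Weierstrass: vanishing moments in the limit. -/
lemma weak_conv (g : ℕ → ℝ → ℝ) (M : ℝ) (hg : ∀ n, IntegrableOn (g n) (Ioi 0))
    (hM : ∀ n, ∫ t in Ioi (0:ℝ), |g n t| ≤ M)
    (hk : ∀ k : ℕ, Tendsto (fun n => ∫ t in Ioi (0:ℝ), g n t * Real.exp (-t) ^ k) atTop (nhds 0))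
    (ψ : ℝ → ℝ) (hψ : Continuous ψ) :
    (∀ n, IntegrableOn (fun t => g n t * ψ (Real.exp (-t))) (Ioi 0)) ∧
    Tendsto (fun n => ∫ t in Ioi (0:ℝ), g n t * ψ (Real.exp (-t))) atTop (nhds 0) := by
  have hIntg : ∀ (φ : ℝ → ℝ), Continuous φ → ∀ n,
      IntegrableOn (fun t => g n t * φ (Real.exp (-t))) (Ioi 0) := by
    intro φ hφ n
    obtain ⟨C, hC⟩ := (isCompact_Icc (a := (0:ℝ)) (b := 1)).exists_bound_of_continuousOn hφ.continuousOn
    refine Integrable.mul_bdd (c := C) (hg n) ?_ ?_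
    · exact (hφ.comp (by fun_prop)).aestronglyMeasurable
    · refine (ae_restrict_mem measurableSet_Ioi).mono fun t ht => hC _ ⟨(Real.exp_pos _).le, ?_⟩
      have ht : 0 < t := ht
      exact Real.exp_le_one_iff.2 (by linarith)
  have hpoly : ∀ P : Polynomial ℝ,
      Tendsto (fun n => ∫ t in Ioi (0:ℝ), g n t * P.eval (Real.exp (-t))) atTop (nhds 0) := by
    intro P
    induction P using Polynomial.induction_on' with
    | add P Q hP hQ =>
      have := hP.add hQ
      rw [add_zero] at this
      refine this.congr fun n => ?_
      rw [← integral_add (hIntg _ P.continuous n) (hIntg _ Q.continuous n)]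
      simp [mul_add]
    | monomial k a =>
      have := (hk k).const_mul a
      rw [mul_zero] at this
      refine this.congr fun n => ?_
      rw [← integral_const_mul]
      congr 1; ext t; simp; ring
  refine ⟨hIntg ψ hψ, ?_⟩
  have hM0 : 0 ≤ M := le_trans (integral_nonneg fun t => abs_nonneg _) (hM 0)
  rw [Metric.tendsto_atTop]
  intro ε hε
  set η := ε / (2 * (M + 1)) with hη
  have hη0 : 0 < η := by positivity
  obtain ⟨P, hP⟩ := exists_polynomial_near_of_continuousOn 0 1 ψ hψ.continuousOn η hη0
  obtain ⟨n0, hn0⟩ := (Metric.tendsto_atTop.1 (hpoly P)) (ε / 2) (by positivity)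
  refine ⟨n0, fun n hn => ?_⟩
  have h1 := hn0 n hn
  rw [Real.dist_eq, sub_zero] at h1 ⊢
  have h2 : |(∫ t in Ioi (0:ℝ), g n t * P.eval (Real.exp (-t))) -
      ∫ t in Ioi (0:ℝ), g n t * ψ (Real.exp (-t))| ≤ η * M := by
    rw [← integral_sub (hIntg _ P.continuous n) (hIntg _ hψ n)]
    calc |∫ t in Ioi (0:ℝ), (g n t * P.eval (Real.exp (-t)) - g n t * ψ (Real.exp (-t)))|
        ≤ ∫ t in Ioi (0:ℝ), |g n t * P.eval (Real.exp (-t)) - g n t * ψ (Real.exp (-t))| :=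
          abs_integral_le_integral_abs
      _ ≤ ∫ t in Ioi (0:ℝ), η * |g n t| := by
          refine setIntegral_mono_on ((hIntg _ P.continuous n).sub (hIntg _ hψ n)).abs
            ((hg n).abs.const_mul η) measurableSet_Ioi fun t ht => ?_
          have ht : 0 < t := ht
          rw [← mul_sub, abs_mul, mul_comm]
          gcongr
          exact (hP _ ⟨(Real.exp_pos _).le, Real.exp_le_one_iff.2 (by linarith)⟩).le
      _ = η * ∫ t in Ioi (0:ℝ), |g n t| := integral_const_mul _ _
      _ ≤ η * M := by gcongr; exact hM n
  have h3 : η * M ≤ ε / 2 := by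
    rw [hη, div_mul_eq_mul_div, div_le_div_iff₀ (by positivity) (by positivity)]
    nlinarith
  have h4 := abs_sub_abs_le_abs_sub (∫ t in Ioi (0:ℝ), g n t * ψ (Real.exp (-t)))
    (∫ t in Ioi (0:ℝ), g n t * P.eval (Real.exp (-t)))
  rw [abs_sub_comm] at h4
  linarith

/-- Pointwise convergence from equicontinuity and weak convergence. -/
lemma pointwise_conv (ι : ℕ → Type) [∀ n, Fintype (ι n)] (b s : ∀ n, ι n → ℝ)
    (hb : ∀ n j, 0 ≤ b n j) (hs : ∀ n j, 0 ≤ s n j) (hb1 : ∀ n, ∑ j, b n j ≤ 1)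
    (u : ℝ → ℝ) (hu : ContinuousOn u (Set.Ioi 0))
    (hw : ∀ ψ : ℝ → ℝ, Continuous ψ →
      (∀ n, IntegrableOn (fun t => Real.exp (-t) * (esum (b n) (s n) 0 t - u t) * ψ (Real.exp (-t)))
        (Ioi 0)) ∧
      Tendsto (fun n => ∫ t in Ioi (0:ℝ), Real.exp (-t) * (esum (b n) (s n) 0 t - u t) *
        ψ (Real.exp (-t))) atTop (nhds 0))
    (t0 : ℝ) (ht0 : 0 < t0) :
    Tendsto (fun n => esum (b n) (s n) 0 t0) atTop (nhds (u t0)) := by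
  rw [Metric.tendsto_atTop]
  intro ε' hε'
  set ε := ε' / 3 with hε
  have hε0 : 0 < ε := by positivity
  -- a neighbourhood on which everything oscillates little
  have hnear : ∀ᶠ t in nhds t0, 0 < t ∧ |u t - u t0| ≤ ε ∧
      ∀ n, |esum (b n) (s n) 0 t - esum (b n) (s n) 0 t0| ≤ ε := by
    have hA : ∀ᶠ t in nhds t0, t0 / 2 < t := Ioi_mem_nhds (by linarith)
    have hB : ∀ᶠ t in nhds t0, dist (u t) (u t0) < ε :=
      Metric.tendsto_nhds.1 (hu.continuousAt (Ioi_mem_nhds ht0)) ε hε0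
    have hC : ∀ᶠ t in nhds t0,
        (1 / (t0 / 2) + 2 / (t0 / 2) ^ 2 * |t - t0|) * |t - t0| < ε := by
      have hcont : Continuous (fun t : ℝ =>
        (1 / (t0 / 2) + 2 / (t0 / 2) ^ 2 * |t - t0|) * |t - t0|) := by fun_prop
      refine hcont.continuousAt.eventually_lt continuousAt_const ?_
      simpa using hε0
    filter_upwards [hA, hB, hC] with t h1 h2 h3
    refine ⟨by linarith, h2.le, fun n => ?_⟩
    exact (esum_lip (b n) (s n) (hb n) (hs n) (hb1 n) (t0 / 2) t t0 (by linarith) h1.le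
      (by linarith)).trans h3.le
  have hlog : Tendsto (fun x : ℝ => -Real.log x) (nhds (Real.exp (-t0))) (nhds t0) := by
    have := ((Real.continuousAt_log (Real.exp_pos (-t0)).ne').neg).tendsto
    rw [Pi.neg_apply, Real.log_exp, neg_neg] at this
    exact this
  obtain ⟨η, hη0, hη⟩ := Metric.eventually_nhds_iff.1 (hlog.eventually hnear)
  have hη' : ∀ t : ℝ, |Real.exp (-t) - Real.exp (-t0)| < η → 0 < t ∧ |u t - u t0| ≤ ε ∧
      ∀ n, |esum (b n) (s n) 0 t - esum (b n) (s n) 0 t0| ≤ ε := by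
    intro t ht
    have := hη (y := Real.exp (-t)) ht
    simpa using this
  set ψ : ℝ → ℝ := fun x => max 0 (η - |x - Real.exp (-t0)|) with hψ
  have hψc : Continuous ψ := by fun_prop
  have hψ0 : ∀ x, 0 ≤ ψ x := fun x => le_max_left _ _
  set I := ∫ t in Ioi (0:ℝ), Real.exp (-t) * ψ (Real.exp (-t)) with hI
  have hIint : IntegrableOn (fun t => Real.exp (-t) * ψ (Real.exp (-t))) (Ioi 0) := by
    have h1 : IntegrableOn (fun t : ℝ => Real.exp (-t)) (Ioi 0) := by
      simpa using integrableOn_exp_mul_Ioi (show (-1:ℝ) < 0 by norm_num) 0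
    refine Integrable.mul_bdd (c := η) h1 (hψc.comp (by fun_prop)).aestronglyMeasurable ?_
    refine Eventually.of_forall fun t => ?_
    rw [Real.norm_of_nonneg (hψ0 _)]
    exact max_le hη0.le (by linarith [abs_nonneg (Real.exp (-t) - Real.exp (-t0))])
  have hIpos : 0 < I := by
    rw [hI, setIntegral_pos_iff_support_of_nonneg_ae
      (Eventually.of_forall fun t => mul_nonneg (Real.exp_pos _).le (hψ0 _)) hIint]
    refine IsOpen.measure_pos volume ?_ ⟨t0, ?_, ht0⟩
    · refine IsOpen.inter ?_ isOpen_Ioi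
      exact (show Continuous (fun t : ℝ => Real.exp (-t) * ψ (Real.exp (-t))) by
        fun_prop).isOpen_support
    · simp [hψ, hη0]
  obtain ⟨hIntg, hlim⟩ := hw ψ hψc
  obtain ⟨n0, hn0⟩ := Metric.tendsto_atTop.1 hlim (ε * I) (by positivity)
  refine ⟨n0, fun n hn => ?_⟩
  have h1 := hn0 n hn
  rw [Real.dist_eq, sub_zero] at h1
  rw [Real.dist_eq]
  set d := esum (b n) (s n) 0 t0 - u t0 with hd
  have h2 : |d * I - ∫ t in Ioi (0:ℝ), Real.exp (-t) * (esum (b n) (s n) 0 t - u t) *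
        ψ (Real.exp (-t))| ≤ 2 * ε * I := by
    rw [hI, ← integral_const_mul, ← integral_const_mul,
      ← integral_sub (hIint.const_mul d) (hIntg n)]
    refine abs_integral_le_integral_abs.trans ?_
    refine integral_mono ((hIint.const_mul d).sub (hIntg n)).abs (hIint.const_mul (2 * ε)) fun t => ?_
    have e0 : d * (Real.exp (-t) * ψ (Real.exp (-t))) -
        Real.exp (-t) * (esum (b n) (s n) 0 t - u t) * ψ (Real.exp (-t)) =
        (d - (esum (b n) (s n) 0 t - u t)) * (Real.exp (-t) * ψ (Real.exp (-t))) := by ring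
    have hnn : 0 ≤ Real.exp (-t) * ψ (Real.exp (-t)) := mul_nonneg (Real.exp_pos _).le (hψ0 _)
    simp only [e0, abs_mul]
    rw [← abs_mul, abs_of_nonneg hnn]
    by_cases hc : |Real.exp (-t) - Real.exp (-t0)| < η
    · obtain ⟨-, q1, q2⟩ := hη' t hc
      have q2 := q2 n
      refine mul_le_mul_of_nonneg_right ?_ hnn
      rw [abs_le] at *
      constructor <;> linarith [q1.1, q1.2, q2.1, q2.2]
    · have : ψ (Real.exp (-t)) = 0 := max_eq_left (by linarith)
      simp [this]
  have h3 : |d| * I < 3 * ε * I := by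
    have := abs_sub_abs_le_abs_sub (d * I) (∫ t in Ioi (0:ℝ), Real.exp (-t) *
      (esum (b n) (s n) 0 t - u t) * ψ (Real.exp (-t)))
    rw [abs_mul, abs_of_pos hIpos] at this
    linarith
  have := lt_of_mul_lt_mul_right h3 hIpos.le
  linarith

theorem relaxation_solution_completely_monotone (μ : ℝ → ℝ)
    (hc : ContinuousOn μ (Set.Icc 0 1))
    (hnn : ∀ α ∈ Set.Icc (0:ℝ) 1, 0 ≤ μ α)
    (hne : ∃ α ∈ Set.Icc (0:ℝ) 1, μ α ≠ 0)
    (hC2 : ContDiffOn ℝ 2 μ (Set.Icc 0 1))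
    (h1 : μ 1 ≠ 0)
    (lam : ℝ) (hlam : lam < 0)
    (u : ℝ → ℝ) (hu : ContinuousOn u (Set.Ioi 0))
    (hloc : LocallyIntegrableOn u (Set.Ioi 0))
    (hlap : ∀ p : ℝ, 0 < p →
      IntegrableOn (fun t : ℝ => Real.exp (-p * t) * u t) (Set.Ioi 0) ∧
      ∫ t in Set.Ioi (0:ℝ), Real.exp (-p * t) * u t
        = Kreal μ p / (p * Kreal μ p - lam)) :
    CompletelyMonotoneOn u := by
  choose ι hι b s hb hs hb1 happ using approx μ hc hnn lam hlam
  refine cm_of_limit ι b s hb hs hb1 u fun t0 ht0 =>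
    pointwise_conv ι b s hb hs hb1 u hu (fun ψ hψ => ?_) t0 ht0
  have hexp : ∀ t : ℝ, Real.exp (-t) = Real.exp (-1 * t) := fun t => by rw [neg_one_mul]
  have hE1 := fun n => esum_laplace (b n) (s n) (hs n)
  have hub : IntegrableOn (fun t : ℝ => Real.exp (-1 * t) * (1 + |u t|)) (Ioi 0) := by
    have h2 : IntegrableOn (fun t : ℝ => Real.exp (-1 * t)) (Ioi 0) :=
      integrableOn_exp_mul_Ioi (by norm_num) 0
    refine (h2.add (hlap 1 one_pos).1.abs).congr (Eventually.of_forall fun t => ?_)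
    simp [abs_mul, mul_add]
  refine weak_conv (fun n t => Real.exp (-t) * (esum (b n) (s n) 0 t - u t))
    (∫ t in Ioi (0:ℝ), Real.exp (-1 * t) * (1 + |u t|)) ?_ ?_ ?_ ψ hψ
  · intro n
    refine (((hE1 n) 1 one_pos).1.sub (hlap 1 one_pos).1).congr (Eventually.of_forall fun t => ?_)
    simp [mul_sub]
  · intro n
    refine setIntegral_mono_on ?_ hub measurableSet_Ioi fun t ht => ?_
    · refine Integrable.abs ?_
      refine (((hE1 n) 1 one_pos).1.sub (hlap 1 one_pos).1).congr (Eventually.of_forall fun t => ?_)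
      simp [mul_sub]
    · rw [abs_mul, Real.abs_exp, hexp]
      have := esum_bound (b n) (s n) (hb n) (hs n) (hb1 n) 0 t ht
      simp only [Nat.factorial, pow_zero, Nat.cast_one, div_one] at this
      gcongr
      exact (abs_sub _ _).trans (by linarith)
  · intro k
    have hk0 : (0:ℝ) < (k : ℝ) + 1 := by positivity
    have heq : ∀ n, ∫ t in Ioi (0:ℝ), Real.exp (-t) * (esum (b n) (s n) 0 t - u t) *
        Real.exp (-t) ^ k = ∑ j, b n j / ((k : ℝ) + 1 + s n j) -
        Kreal μ ((k : ℝ) + 1) / (((k : ℝ) + 1) * Kreal μ ((k : ℝ) + 1) - lam) := by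
      intro n
      rw [← ((hE1 n) _ hk0).2, ← (hlap _ hk0).2, ← integral_sub ((hE1 n) _ hk0).1 (hlap _ hk0).1]
      congr 1
      ext t
      have : Real.exp (-((k : ℝ) + 1) * t) = Real.exp (-t) * Real.exp (-t) ^ k := by
        rw [← Real.exp_nat_mul, ← Real.exp_add]; congr 1; ring
      rw [this]; ring
    simp only [heq]
    refine squeeze_zero_norm' ?_ tendsto_one_div_add_atTop_nhds_zero_nat
    filter_upwards [eventually_gt_atTop k] with n hn
    exact (happ n k hn).le
end

section
/- Let μ be a continuous non-negative function on [0,1], not identically zero, twice continuously differentiable, with μ(1) ≠ 0 and μ(0) ≠ 0, and let λ < 0. Suppose u : (0,∞) → ℝ is continuous and locally integrable, and its Laplace transform converges absolutely and satisfies ∫₀^∞ e^{−pt} u(t) dt = K(p)/(p K(p) − λ) for all real p > 0. Then u(t) ∼ C (log t)^{−1} as t → ∞ with C = μ(0)/(−λ); that is, lim_{t→∞} (log t) · u(t) = μ(0)/(−λ). -/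
open MeasureTheory Filter Set

/-- finite-order complete monotonicity of a sequence -/
def CMseq : ℕ → (ℕ → ℝ) → Prop
  | 0, f => ∀ k, 0 ≤ f k
  | n + 1, f => (∀ k, 0 ≤ f k) ∧ CMseq n (fun k => f k - f (k + 1))

lemma CMseq.nonneg {n : ℕ} {f : ℕ → ℝ} (h : CMseq n f) (k : ℕ) : 0 ≤ f k := by
  cases n with
  | zero => exact h k
  | succ n => exact h.1 k

lemma CMseq.pred {n : ℕ} : ∀ {f : ℕ → ℝ}, CMseq (n + 1) f → CMseq n f := by
  induction n with
  | zero => intro f h; exact h.1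
  | succ n ih => intro f h; exact ⟨h.1, ih h.2⟩

lemma CMseq.shift {n : ℕ} : ∀ {f : ℕ → ℝ}, CMseq n f → CMseq n (fun k => f (k + 1)) := by
  induction n with
  | zero => intro f h k; exact h (k + 1)
  | succ n ih => intro f h; exact ⟨fun k => h.1 (k + 1), ih h.2⟩

lemma CMseq.add {n : ℕ} : ∀ {f g : ℕ → ℝ}, CMseq n f → CMseq n g →
    CMseq n (fun k => f k + g k) := by
  induction n with
  | zero => intro f g hf hg k; exact add_nonneg (hf k) (hg k)
  | succ n ih =>
    intro f g hf hg
    refine ⟨fun k => add_nonneg (hf.1 k) (hg.1 k), ?_⟩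
    convert ih hf.2 hg.2 using 2
    ring

lemma CMseq.mul {n : ℕ} : ∀ {f g : ℕ → ℝ}, CMseq n f → CMseq n g →
    CMseq n (fun k => f k * g k) := by
  induction n with
  | zero => intro f g hf hg k; exact mul_nonneg (hf k) (hg k)
  | succ n ih =>
    intro f g hf hg
    refine ⟨fun k => mul_nonneg (hf.1 k) (hg.1 k), ?_⟩
    convert (ih hf.2 hg.pred).add (ih hf.pred.shift hg.2) using 2
    ring

lemma CMseq.const (n : ℕ) : ∀ {c : ℝ}, 0 ≤ c → CMseq n (fun _ => c) := by
  induction n with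
  | zero => intro c hc k; exact hc
  | succ n ih =>
    intro c hc
    refine ⟨fun k => hc, ?_⟩
    simpa using ih le_rfl

lemma CMseq.inv {g : ℕ → ℝ} (hg : ∀ k, 0 < g k) (n : ℕ)
    (hd : ∀ n, CMseq n (fun k => g (k + 1) - g k)) : CMseq n (fun k => (g k)⁻¹) := by
  induction n with
  | zero => intro k; exact (inv_pos.2 (hg k)).le
  | succ n ih =>
    refine ⟨fun k => (inv_pos.2 (hg k)).le, ?_⟩
    convert ((hd n).mul ih).mul ih.shift using 2 with k
    have h1 := (hg k).ne'
    have h2 := (hg (k + 1)).ne'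
    field_simp

lemma CMseq.integral {ν : Measure ℝ} (n : ℕ) : ∀ {F : ℕ → ℝ → ℝ},
    (∀ k, Integrable (F k) ν) → (∀ᵐ t ∂ν, CMseq n (fun k => F k t)) →
    CMseq n (fun k => ∫ t, F k t ∂ν) := by
  induction n with
  | zero =>
    intro F hi h k
    refine integral_nonneg_of_ae ?_
    filter_upwards [h] with t ht using ht k
  | succ n ih =>
    intro F hi h
    refine ⟨fun k => integral_nonneg_of_ae ?_, ?_⟩
    · filter_upwards [h] with t ht using ht.1 k
    · have := ih (F := fun k t => F k t - F (k + 1) t) (fun k => (hi k).sub (hi (k + 1)))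
        (by filter_upwards [h] with t ht using ht.2)
      convert this using 2 with k
      rw [integral_sub (hi k) (hi (k + 1))]

lemma CMseq.rpow_diff {a : ℝ} (ha : a ∈ Ioo (0:ℝ) 1) (n : ℕ) :
    CMseq n (fun k : ℕ => ((k : ℝ) + 1 + 1) ^ a - ((k : ℝ) + 1) ^ a) := by
  set C : ℝ := (∫ t in Ioi 0, Real.rpowIntegrand₀₁ a t 1)⁻¹ with hC
  have hCn : 0 ≤ C := inv_nonneg.2 (setIntegral_nonneg measurableSet_Ioi
    fun t ht => Real.rpowIntegrand₀₁_nonneg ha.1 (le_of_lt ht) zero_le_one)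
  have h_itg : ∀ x : ℝ, 0 ≤ x → IntegrableOn (fun t => Real.rpowIntegrand₀₁ a t x) (Ioi 0) :=
    fun x hx => Real.integrableOn_rpowIntegrand₀₁_Ioi ha hx
  have hrep : ∀ x : ℝ, 0 ≤ x → x ^ a = C * ∫ t in Ioi 0, Real.rpowIntegrand₀₁ a t x :=
    fun x hx => Real.rpow_eq_const_mul_integral ha hx
  have key := CMseq.integral (ν := volume.restrict (Ioi (0:ℝ))) n
    (F := fun k t => Real.rpowIntegrand₀₁ a t ((k:ℝ)+1+1) - Real.rpowIntegrand₀₁ a t ((k:ℝ)+1))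
    (fun k => (h_itg _ (by positivity)).sub (h_itg _ (by positivity))) (by
      filter_upwards [ae_restrict_mem measurableSet_Ioi] with t ht
      have ht : 0 < t := ht
      have h1 : CMseq (n+1) (fun k : ℕ => (t + ((k:ℝ) + 1))⁻¹) := by
        refine CMseq.inv (fun k => by positivity) _ (fun m => ?_)
        convert CMseq.const m (zero_le_one' ℝ) using 2
        push_cast; ring
      convert (CMseq.const n (Real.rpow_nonneg ht.le a)).mul h1.2 using 2
      simp only [Real.rpowIntegrand₀₁]; push_cast; ring)
  convert (CMseq.const n hCn).mul key using 2 with k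
  rw [hrep _ (by positivity), hrep _ (by positivity : (0:ℝ) ≤ (k:ℝ)+1), integral_sub (h_itg _ (by positivity)) (h_itg _ (by positivity))]
  ring

/-- `g(p) = ∫₀¹ p^α μ(α) dα` -/
noncomputable def gfun (μ : ℝ → ℝ) (p : ℝ) : ℝ := ∫ α in (0:ℝ)..1, p ^ α * μ α

lemma gfun_int {μ : ℝ → ℝ} (hc : ContinuousOn μ (Set.Icc 0 1)) {p : ℝ} (hp : 0 < p) :
    IntegrableOn (fun α => p ^ α * μ α) (Ioc 0 1) := by
  have : ContinuousOn (fun α => p ^ α * μ α) (Icc 0 1) := 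
    (Continuous.continuousOn (Real.continuous_const_rpow hp.ne')).mul hc
  exact this.integrableOn_Icc.mono_set Ioc_subset_Icc_self

lemma gfun_nonneg {μ : ℝ → ℝ} (hnn : ∀ α ∈ Set.Icc (0:ℝ) 1, 0 ≤ μ α) {p : ℝ} (hp : 0 < p) :
    0 ≤ gfun μ p := by
  refine intervalIntegral.integral_nonneg zero_le_one fun a ha => mul_nonneg (by positivity) (hnn a ha)

lemma gfun_cm {μ : ℝ → ℝ} (hc : ContinuousOn μ (Set.Icc 0 1))
    (hnn : ∀ α ∈ Set.Icc (0:ℝ) 1, 0 ≤ μ α) (n : ℕ) :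
    CMseq n (fun k : ℕ => gfun μ ((k:ℝ) + 1 + 1) - gfun μ ((k:ℝ)+1)) := by
  have key := CMseq.integral (ν := volume.restrict (Ioc (0:ℝ) 1)) n
    (F := fun k α => ((k:ℝ)+1+1) ^ α * μ α - ((k:ℝ)+1) ^ α * μ α)
    (fun k => (gfun_int hc (by positivity)).sub (gfun_int hc (by positivity))) (by
      have : ∀ᵐ x : ℝ, x ≠ 1 := by simp [ae_iff]
      filter_upwards [ae_restrict_mem measurableSet_Ioc, ae_restrict_of_ae this] with t ht ht1
      convert (CMseq.const n (hnn t ⟨ht.1.le, ht.2⟩)).mul 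
        (CMseq.rpow_diff ⟨ht.1, lt_of_le_of_ne ht.2 ht1⟩ n) using 2
      ring)
  convert key using 2 with k
  rw [integral_sub (gfun_int hc (by positivity)) (gfun_int hc (by positivity)), gfun, gfun,
    intervalIntegral.integral_of_le zero_le_one, intervalIntegral.integral_of_le zero_le_one]

lemma phi_cm {μ : ℝ → ℝ} (hc : ContinuousOn μ (Set.Icc 0 1))
    (hnn : ∀ α ∈ Set.Icc (0:ℝ) 1, 0 ≤ μ α) {c : ℝ} (hc0 : 0 < c) (n : ℕ) :
    CMseq n (fun k : ℕ => c * (gfun μ ((k:ℝ)+1) + c)⁻¹) := by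
  refine (CMseq.const n hc0.le).mul (CMseq.inv (fun k => ?_) n fun m => ?_)
  · have := gfun_nonneg hnn (p := (k:ℝ)+1) (by positivity)
    positivity
  · convert gfun_cm hc hnn m using 2
    push_cast; ring

lemma Kreal_aux (μ : ℝ → ℝ) {p : ℝ} (hp : 0 < p) :
    p * (∫ α in (0:ℝ)..1, p ^ (α - 1) * μ α) = gfun μ p := by
  rw [gfun, ← intervalIntegral.integral_const_mul]
  congr 1; ext a
  rw [Real.rpow_sub_one hp.ne']; field_simp

/-- iterated (sign-alternating) differences -/
def Dseq : ℕ → (ℕ → ℝ) → ℕ → ℝ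
  | 0, f, k => f k
  | n + 1, f, k => Dseq n f k - Dseq n f (k + 1)

lemma Dseq_succ' (n : ℕ) : ∀ (f : ℕ → ℝ) (k : ℕ),
    Dseq (n + 1) f k = Dseq n (fun k => f k - f (k + 1)) k := by
  induction n with
  | zero => intro f k; rfl
  | succ n ih =>
    intro f k
    rw [Dseq, ih, ih]; rfl

lemma Dseq_nonneg (n : ℕ) : ∀ {f : ℕ → ℝ}, CMseq n f → ∀ k, 0 ≤ Dseq n f k := by
  induction n with
  | zero => intro f h k; exact h k
  | succ n ih => intro f h k; rw [Dseq_succ']; exact ih h.2 k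

/-- Beta-type moments of `v` on `[0,1]` -/
noncomputable def Emom (v : ℝ → ℝ) (k m : ℕ) : ℝ :=
  ∫ x in Icc (0:ℝ) 1, x ^ k * (1 - x) ^ m * v x

lemma Emom_int {v : ℝ → ℝ} (hv : IntegrableOn v (Icc 0 1)) (k m : ℕ) :
    IntegrableOn (fun x => x ^ k * (1 - x) ^ m * v x) (Icc 0 1) :=
  hv.continuousOn_mul (by fun_prop) isCompact_Icc

lemma Emom_succ {v : ℝ → ℝ} (hv : IntegrableOn v (Icc 0 1)) (k m : ℕ) :
    Emom v k (m + 1) = Emom v k m - Emom v (k + 1) m := by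
  rw [Emom, Emom, Emom, ← integral_sub (Emom_int hv _ _) (Emom_int hv _ _)]
  congr 1; ext x; ring

lemma Emom_rec {v : ℝ → ℝ} (hv : IntegrableOn v (Icc 0 1)) {φ : ℕ → ℝ}
    (h : ∀ k : ℕ, ((k:ℝ) + 1) * Emom v k 0 = 1 - φ k) (m : ℕ) : ∀ k : ℕ,
    ((k:ℝ) + 1) * Emom v k (m + 1) - ((m:ℝ) + 1) * Emom v (k + 1) m = - Dseq (m + 1) φ k := by
  induction m with
  | zero =>
    intro k
    have h1 := h k
    have h2 := h (k + 1)
    push_cast at h2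
    simp only [Emom_succ hv, Dseq, Nat.cast_zero]
    linarith
  | succ m ih =>
    intro k
    have h1 := ih k
    have h2 := ih (k + 1)
    rw [Dseq, ← sub_eq_zero]
    rw [← sub_eq_zero] at h1 h2
    have e1 := Emom_succ hv k (m + 1)
    have e2 := Emom_succ hv (k + 1) m
    push_cast at *
    rw [e1]
    linear_combination h1 - h2 - ((m:ℝ) + 1) * e2

lemma Emom_one_zero (k : ℕ) : Emom (fun _ => 1) k 0 = ((k:ℝ) + 1)⁻¹ := by
  rw [Emom, integral_Icc_eq_integral_Ioc, ← intervalIntegral.integral_of_le zero_le_one]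
  simp

lemma int_one : IntegrableOn (fun _ : ℝ => (1:ℝ)) (Icc 0 1) := by
  simp

lemma Emom_one_rec (k m : ℕ) :
    ((k:ℝ) + 1) * Emom (fun _ => 1) k (m + 1) = ((m:ℝ) + 1) * Emom (fun _ => 1) (k + 1) m := by
  have := Emom_rec int_one (φ := fun _ => 0) (fun k => by
    rw [Emom_one_zero]; have : (k:ℝ) + 1 ≠ 0 := by positivity
    field_simp; simp) m k
  have h0 : ∀ n k, Dseq n (fun _ => 0) k = 0 := by
    intro n
    induction n with
    | zero => intro k; rfl
    | succ n ih => intro k; rw [Dseq, ih, ih, sub_zero]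
  rw [h0] at this
  linarith

lemma Emom_one_pos (m : ℕ) : ∀ k, 0 < Emom (fun _ => 1) k m := by
  induction m with
  | zero => intro k; rw [Emom_one_zero]; positivity
  | succ m ih =>
    intro k
    have h1 := Emom_one_rec k m
    have h2 := ih (k + 1)
    have : 0 < ((k:ℝ) + 1) * Emom (fun _ => 1) k (m + 1) := by rw [h1]; positivity
    exact pos_of_mul_pos_right this (by positivity)

/-- normalised Beta means -/
noncomputable def Rmean (v : ℝ → ℝ) (k m : ℕ) : ℝ := (Emom (fun _ => 1) k m)⁻¹ * Emom v k m

lemma Rmean_le {v : ℝ → ℝ} (hv : IntegrableOn v (Icc 0 1)) {φ : ℕ → ℝ}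
    (h : ∀ k : ℕ, ((k:ℝ) + 1) * Emom v k 0 = 1 - φ k) (hφ : ∀ n, CMseq n φ) (k m : ℕ) :
    Rmean v k (m + 1) ≤ Rmean v (k + 1) m := by
  have h1 := Emom_rec hv h m k
  have h2 := Dseq_nonneg (m + 1) (hφ _) k
  have h3 := Emom_one_rec k m
  have p1 := Emom_one_pos (m + 1) k
  have p2 := Emom_one_pos m (k + 1)
  rw [Rmean, Rmean, inv_mul_eq_div, inv_mul_eq_div, div_le_div_iff₀ p1 p2]
  have hk : (0:ℝ) < (k:ℝ) + 1 := by positivity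
  refine le_of_mul_le_mul_left ?_ hk
  have h4 : ((k:ℝ) + 1) * Emom v k (m + 1) ≤ ((m:ℝ) + 1) * Emom v (k + 1) m := by linarith
  have h5 := mul_le_mul_of_nonneg_right h4 p2.le
  linear_combination h5 + Emom v (k + 1) m * (-h3)

lemma Rmean_le' {v : ℝ → ℝ} (hv : IntegrableOn v (Icc 0 1)) {φ : ℕ → ℝ}
    (h : ∀ k : ℕ, ((k:ℝ) + 1) * Emom v k 0 = 1 - φ k) (hφ : ∀ n, CMseq n φ) (m i : ℕ) : ∀ k,
    Rmean v k (m + i) ≤ Rmean v (k + i) m := by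
  induction i with
  | zero => intro k; exact le_rfl
  | succ i ih =>
    intro k
    refine (Rmean_le hv h hφ k (m + i)).trans ((ih (k + 1)).trans_eq ?_)
    congr 1; ring

lemma peak_max {a b : ℕ} (ha : 0 < a) (hb : 0 < b) {y : ℝ} (hy : y ∈ Icc (0:ℝ) 1)
    (hne : y ≠ (a:ℝ) / (a + b)) :
    y ^ a * (1 - y) ^ b < ((a:ℝ) / (a + b)) ^ a * (1 - (a:ℝ) / (a + b)) ^ b := by
  have ha' : (0:ℝ) < a := by exact_mod_cast ha
  have hb' : (0:ℝ) < b := by exact_mod_cast hb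
  set x : ℝ := (a:ℝ) / (a + b) with hx
  have hx0 : 0 < x := by positivity
  have hx1 : 1 - x = (b:ℝ) / (a + b) := by rw [hx]; field_simp; ring
  have hx10 : 0 < 1 - x := by rw [hx1]; positivity
  have e1 : y / x < Real.exp (y / x - 1) := by
    have := Real.add_one_lt_exp (x := y / x - 1) (by
      intro h; apply hne; field_simp at h; linarith)
    linarith
  have e2 : (1 - y) / (1 - x) < Real.exp ((1 - y) / (1 - x) - 1) := by
    have := Real.add_one_lt_exp (x := (1 - y) / (1 - x) - 1) (by
      intro h; apply hne; field_simp at h; linarith)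
    linarith
  have hy1 : 0 ≤ 1 - y := by linarith [hy.2]
  have f1 := pow_lt_pow_left₀ e1 (div_nonneg hy.1 hx0.le) ha.ne'
  have f2 := pow_lt_pow_left₀ e2 (div_nonneg hy1 hx10.le) hb.ne'
  have f3 := mul_lt_mul'' f1 f2 (pow_nonneg (div_nonneg hy.1 hx0.le) _)
    (pow_nonneg (div_nonneg hy1 hx10.le) _)
  rw [← Real.exp_nat_mul, ← Real.exp_nat_mul, ← Real.exp_add] at f3
  have : (a:ℝ) * (y / x - 1) + b * ((1 - y) / (1 - x) - 1) = 0 := by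
    rw [hx1, hx]; field_simp; ring
  clear_value x
  rw [this, Real.exp_zero, div_pow, div_pow, div_mul_div_comm, div_lt_one (by positivity)] at f3
  exact f3

lemma Rmean_tendsto {v : ℝ → ℝ} (hv : IntegrableOn v (Icc 0 1)) (hc : ContinuousOn v (Ioo 0 1))
    {a b : ℕ} (ha : 0 < a) (hb : 0 < b) :
    Tendsto (fun n : ℕ => Rmean v (a * n) (b * n)) atTop (nhds (v ((a:ℝ) / (a + b)))) := by
  have ha' : (0:ℝ) < a := by exact_mod_cast ha
  have hb' : (0:ℝ) < b := by exact_mod_cast hb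
  have hx : (a:ℝ) / (a + b) ∈ Ioo (0:ℝ) 1 := ⟨by positivity, by rw [div_lt_one] <;> linarith⟩
  have := tendsto_setIntegral_pow_smul_of_unique_maximum_of_isCompact_of_integrableOn
    (μ := volume) (s := Icc (0:ℝ) 1) (g := v) (x₀ := (a:ℝ) / (a + b)) isCompact_Icc
    (c := fun x => x ^ a * (1 - x) ^ b) (by fun_prop) (fun y hy hne => peak_max ha hb hy hne)
    (fun x hx => mul_nonneg (pow_nonneg hx.1 _) (pow_nonneg (by linarith [hx.2]) _))
    (mul_pos (pow_pos hx.1 _) (pow_pos (by linarith [hx.2]) _))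
    (by rw [interior_Icc]; exact subset_closure hx) hv
    (hc.continuousAt (Ioo_mem_nhds hx.1 hx.2)).continuousWithinAt
  convert this using 2 with n
  rw [Rmean, Emom, Emom, smul_eq_mul]
  simp only [smul_eq_mul, mul_pow, ← pow_mul, mul_one]

lemma v_mono {v : ℝ → ℝ} (hv : IntegrableOn v (Icc 0 1)) (hc : ContinuousOn v (Ioo 0 1)) {φ : ℕ → ℝ}
    (h : ∀ k : ℕ, ((k:ℝ) + 1) * Emom v k 0 = 1 - φ k) (hφ : ∀ n, CMseq n φ) :
    MonotoneOn v (Ioo 0 1) := by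
  have hrat : ∀ a a' N : ℕ, 0 < a → a < a' → a' < N → v ((a:ℝ) / N) ≤ v ((a':ℝ) / N) := by
    intro a a' N h0 h1 h2
    obtain ⟨d, rfl⟩ := Nat.exists_eq_add_of_lt h1
    obtain ⟨b, rfl⟩ := Nat.exists_eq_add_of_lt h2
    have t1 := Rmean_tendsto hv hc (a := a) (b := (b + 1) + (d + 1)) h0 (by omega)
    have t2 := Rmean_tendsto hv hc (a := a + (d + 1)) (b := b + 1) (by omega) (by omega)
    have := le_of_tendsto_of_tendsto' t1 t2 (fun n => by
      have := Rmean_le' hv h hφ ((b + 1) * n) ((d + 1) * n) (a * n)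
      rwa [← add_mul, ← add_mul] at this)
    have q1 : ((a + d + 1 + b + 1 : ℕ) : ℝ) = (a:ℝ) + (((b + 1) + (d + 1) : ℕ) : ℝ) := by
      push_cast; ring
    have q2 : ((a + d + 1 + b + 1 : ℕ) : ℝ) = ((a + (d + 1) : ℕ) : ℝ) + ((b + 1 : ℕ) : ℝ) := by
      push_cast; ring
    rw [← q1, ← q2] at this
    exact this
  intro x hx y hy hxy
  rcases hxy.eq_or_lt with rfl | hlt
  · exact le_rfl
  have tx := tendsto_nat_floor_mul_div_atTop hx.1.le
  have ty := tendsto_nat_floor_mul_div_atTop hy.1.le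
  have cx := ((hc.continuousAt (Ioo_mem_nhds hx.1 hx.2)).tendsto.comp tx).comp
    (tendsto_natCast_atTop_atTop (R := ℝ))
  have cy := ((hc.continuousAt (Ioo_mem_nhds hy.1 hy.2)).tendsto.comp ty).comp
    (tendsto_natCast_atTop_atTop (R := ℝ))
  have tx' := tx.comp (tendsto_natCast_atTop_atTop (R := ℝ))
  have ty' := ty.comp (tendsto_natCast_atTop_atTop (R := ℝ))
  refine le_of_tendsto_of_tendsto cx cy ?_
  filter_upwards [tx'.eventually (lt_mem_nhds hx.1), tx'.eventually_lt ty' hlt,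
    ty'.eventually (gt_mem_nhds hy.2), eventually_gt_atTop 0] with n h1 h2 h3 hn
  have hn' : (0:ℝ) < n := by exact_mod_cast hn
  simp only [Function.comp] at h1 h2 h3 ⊢
  rw [div_lt_div_iff_of_pos_right hn'] at h2
  rw [div_lt_one hn'] at h3
  rw [div_pos_iff_of_pos_right hn'] at h1
  exact hrat _ _ _ (by exact_mod_cast h1) (by exact_mod_cast h2) (by exact_mod_cast h3)

lemma exp_neg_image : (fun t : ℝ => Real.exp (-t)) '' Ioi 0 = Ioo 0 1 := by
  ext x
  constructor
  · rintro ⟨t, ht, rfl⟩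
    exact ⟨Real.exp_pos _, by simpa using ht⟩
  · rintro ⟨h0, h1⟩
    exact ⟨-Real.log x, by simpa using Real.log_neg h0 h1, by simp [Real.exp_log h0]⟩

lemma exp_neg_deriv : ∀ x ∈ Ioi (0:ℝ), HasDerivWithinAt (fun t : ℝ => Real.exp (-t))
    (-Real.exp (-x)) (Ioi 0) x := by
  intro x _
  have := (hasDerivAt_neg x).exp
  simpa using this.hasDerivWithinAt

lemma exp_neg_inj : InjOn (fun t : ℝ => Real.exp (-t)) (Ioi 0) := by
  intro x _ y _ h
  simpa using h

lemma cov_integral (f : ℝ → ℝ) :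
    ∫ x in Icc (0:ℝ) 1, f x = ∫ t in Ioi (0:ℝ), Real.exp (-t) * f (Real.exp (-t)) := by
  rw [integral_Icc_eq_integral_Ioo, ← exp_neg_image,
    integral_image_eq_integral_abs_deriv_smul measurableSet_Ioi exp_neg_deriv exp_neg_inj]
  simp [abs_of_pos (Real.exp_pos _)]

lemma cov_integrable (f : ℝ → ℝ) :
    IntegrableOn f (Icc (0:ℝ) 1) ↔
      IntegrableOn (fun t => Real.exp (-t) * f (Real.exp (-t))) (Ioi (0:ℝ)) := by
  rw [integrableOn_Icc_iff_integrableOn_Ioo, ← exp_neg_image,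
    integrableOn_image_iff_integrableOn_abs_deriv_smul measurableSet_Ioi exp_neg_deriv exp_neg_inj]
  simp [abs_of_pos (Real.exp_pos _)]

lemma u_anti {u : ℝ → ℝ} (hu : ContinuousOn u (Ioi 0)) {φ : ℕ → ℝ} (hφ : ∀ n, CMseq n φ)
    (h_itg : IntegrableOn (fun t : ℝ => Real.exp (-t) * u t) (Ioi 0))
    (hlap : ∀ k : ℕ, ((k:ℝ) + 1) * ∫ t in Ioi (0:ℝ), Real.exp (-((k:ℝ) + 1) * t) * u t = 1 - φ k) :
    AntitoneOn u (Ioi 0) := by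
  have hm := v_mono (v := fun x => u (-Real.log x)) (φ := φ)
    ((cov_integrable _).2 (by simpa using h_itg))
    (hu.comp (by
      refine ContinuousOn.neg (Real.continuousOn_log.mono ?_)
      intro x hx; exact hx.1.ne') (by
      intro x hx; simpa using Real.log_neg hx.1 hx.2)) (fun k => by
      rw [← hlap k, Emom, cov_integral]
      congr 2
      ext t
      simp only [pow_zero, mul_one, Real.log_exp, neg_neg, ← Real.exp_nat_mul]
      rw [← mul_assoc, ← Real.exp_add]
      ring_nf) hφ
  intro s hs t ht hst
  have h1 : ∀ t ∈ Ioi (0:ℝ), Real.exp (-t) ∈ Ioo (0:ℝ) 1 := fun t ht =>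
    ⟨Real.exp_pos _, by simpa using ht⟩
  simpa using hm (h1 t ht) (h1 s hs) (by simpa using hst)

lemma lap_tendsto {μ : ℝ → ℝ} (hc : ContinuousOn μ (Set.Icc 0 1)) :
    Tendsto (fun L : ℝ => L * ∫ α in (0:ℝ)..1, Real.exp (-(L * α)) * μ α) atTop (nhds (μ 0)) := by
  obtain ⟨M, hM⟩ := isCompact_Icc.exists_bound_of_continuousOn hc
  have hcont : ∀ L : ℝ, 0 < L → ContinuousOn (fun s => Real.exp (-s) * μ (s / L)) (Icc 0 L) := by
    intro L hL
    refine ContinuousOn.mul (by fun_prop) (hc.comp (by fun_prop) ?_)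
    intro s hs
    exact ⟨div_nonneg hs.1 hL.le, (div_le_one hL).2 hs.2⟩
  have key : Tendsto (fun L : ℝ => ∫ s in Ioi (0:ℝ),
      (Ioc 0 L).indicator (fun s => Real.exp (-s) * μ (s / L)) s) atTop
      (nhds (∫ s in Ioi (0:ℝ), Real.exp (-s) * μ 0)) := by
    refine tendsto_integral_filter_of_dominated_convergence (fun s => M * Real.exp (-s)) ?_ ?_ ?_ ?_
    · filter_upwards [eventually_gt_atTop 0] with L hL
      refine AEStronglyMeasurable.mono_measure ?_ Measure.restrict_le_self
      rw [aestronglyMeasurable_indicator_iff measurableSet_Ioc]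
      exact ((hcont L hL).mono Ioc_subset_Icc_self).aestronglyMeasurable measurableSet_Ioc
    · filter_upwards [eventually_gt_atTop 0] with L hL
      filter_upwards [ae_restrict_mem measurableSet_Ioi] with s hs
      have hM0 : 0 ≤ M := (norm_nonneg _).trans (hM 0 (by simp))
      by_cases h : s ∈ Ioc 0 L
      · rw [indicator_of_mem h, norm_mul, Real.norm_of_nonneg (Real.exp_pos _).le, mul_comm]
        gcongr
        exact hM _ ⟨div_nonneg h.1.le hL.le, (div_le_one hL).2 h.2⟩
      · rw [indicator_of_notMem h, norm_zero]; positivity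
    · refine Integrable.const_mul ?_ M
      have h := exp_neg_integrableOn_Ioi 0 one_pos
      simp only [neg_mul, one_mul] at h
      exact h
    · filter_upwards [ae_restrict_mem measurableSet_Ioi] with s hs
      have hs : 0 < s := hs
      have h1 : Tendsto (fun L : ℝ => s / L) atTop (nhdsWithin 0 (Icc 0 1)) := by
        rw [tendsto_nhdsWithin_iff]
        refine ⟨tendsto_const_nhds.div_atTop tendsto_id, ?_⟩
        filter_upwards [eventually_ge_atTop s] with L hL
        have : 0 < L := hs.trans_le hL
        exact ⟨by positivity, (div_le_one this).2 hL⟩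
      have h2 := ((hc 0 (by simp)).tendsto.comp h1).const_mul (Real.exp (-s))
      refine h2.congr' ?_
      filter_upwards [eventually_ge_atTop s] with L hL
      rw [indicator_of_mem (mem_Ioc.2 ⟨hs, hL⟩)]
      rfl
  rw [integral_mul_const, integral_exp_neg_Ioi_zero, one_mul] at key
  refine key.congr' ?_
  filter_upwards [eventually_gt_atTop 0] with L hL
  have := intervalIntegral.smul_integral_comp_mul_left (a := 0) (b := 1)
    (fun s => Real.exp (-s) * μ (s / L)) L
  rw [smul_eq_mul, mul_zero, mul_one, intervalIntegral.integral_of_le hL.le] at this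
  rw [setIntegral_indicator measurableSet_Ioc, inter_eq_right.2 Ioc_subset_Ioi_self, ← this]
  congr 2
  ext a
  rw [mul_div_cancel_left₀ _ hL.ne']

lemma gfun_log {μ : ℝ → ℝ} (hc : ContinuousOn μ (Set.Icc 0 1)) :
    Tendsto (fun p => (-Real.log p) * gfun μ p) (nhdsWithin 0 (Ioi 0)) (nhds (μ 0)) := by
  have h := (lap_tendsto hc).comp (tendsto_neg_atBot_atTop.comp Real.tendsto_log_nhdsGT_zero)
  refine h.congr' ?_
  filter_upwards [self_mem_nhdsWithin] with p hp
  simp only [Function.comp, gfun]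
  congr 2
  ext a
  rw [Real.rpow_def_of_pos hp]
  congr 2; ring

lemma gfun_zero {μ : ℝ → ℝ} (hc : ContinuousOn μ (Set.Icc 0 1)) :
    Tendsto (gfun μ) (nhdsWithin 0 (Ioi 0)) (nhds 0) := by
  have h := (gfun_log hc).div_atTop (tendsto_neg_atBot_atTop.comp Real.tendsto_log_nhdsGT_zero)
  refine h.congr' ?_
  filter_upwards [Ioo_mem_nhdsGT (zero_lt_one' ℝ)] with p hp
  have := (Real.log_neg hp.1 hp.2).ne
  simp only [Function.comp]
  field_simp

lemma scaled_lim {μ : ℝ → ℝ} (hc : ContinuousOn μ (Set.Icc 0 1)) {c : ℝ} (hc0 : 0 < c)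
    {j : ℝ} (hj : 0 < j) :
    Tendsto (fun T => Real.log T * (gfun μ (j / T) / (gfun μ (j / T) + c))) atTop
      (nhds (μ 0 / c)) := by
  have hT : Tendsto (fun T : ℝ => j / T) atTop (nhdsWithin 0 (Ioi 0)) := by
    rw [tendsto_nhdsWithin_iff]
    refine ⟨tendsto_const_nhds.div_atTop tendsto_id, ?_⟩
    filter_upwards [eventually_gt_atTop 0] with T hT
    exact div_pos hj hT
  have h1 := (gfun_log hc).comp hT
  have h2 := (gfun_zero hc).comp hT
  have h3 := ((h1.add (h2.const_mul (Real.log j))).div (h2.add_const c) (by simpa using hc0.ne'))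
  simp only [mul_zero, add_zero, zero_add] at h3
  refine h3.congr' ?_
  filter_upwards [eventually_gt_atTop 0] with T hT
  simp only [Function.comp, Pi.div_apply]
  rw [Real.log_div hj.ne' hT.ne']
  ring

lemma u_nonneg {u : ℝ → ℝ} (ha : AntitoneOn u (Ioi 0))
    (hi : ∀ p : ℝ, 0 < p → IntegrableOn (fun t : ℝ => Real.exp (-p * t) * u t) (Ioi 0))
    (hp : ∀ p : ℝ, 0 < p → 0 ≤ ∫ t in Ioi (0:ℝ), Real.exp (-p * t) * u t) :
    ∀ t ∈ Ioi (0:ℝ), 0 ≤ u t := by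
  intro s hs
  by_contra hneg
  push Not at hneg
  have hs : 0 < s := hs
  have hus : IntegrableOn u (Ioc 0 s) := by
    have h1 : IntegrableOn (fun t : ℝ => Real.exp (-1 * t) * u t) (Icc 0 s) := by
      rw [integrableOn_Icc_iff_integrableOn_Ioc]
      exact (hi 1 one_pos).mono_set Ioc_subset_Ioi_self
    have h2 := h1.continuousOn_mul (g := fun t => Real.exp t) (by fun_prop) isCompact_Icc
    refine (h2.mono_set Ioc_subset_Icc_self).congr_fun (fun t _ => ?_) measurableSet_Ioc
    simp only
    rw [← mul_assoc, ← Real.exp_add]; simp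
  have hus' : IntegrableOn (fun t => u t - u s) (Ioc 0 s) := hus.sub (by simp)
  set A : ℝ := ∫ t in Ioc 0 s, (u t - u s) with hA
  have hA0 : 0 ≤ A := setIntegral_nonneg measurableSet_Ioc fun t ht =>
    sub_nonneg.2 (ha ht.1 hs ht.2)
  have hbound : ∀ p : ℝ, 0 < p → - u s / p ≤ A := by
    intro p hp0
    have hexp : IntegrableOn (fun t : ℝ => Real.exp (-p * t) * u s) (Ioi 0) :=
      (exp_neg_integrableOn_Ioi 0 hp0).mul_const _
    have e1 : ∫ t in Ioi (0:ℝ), Real.exp (-p * t) * u s = u s / p := by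
      rw [integral_mul_const, integral_exp_mul_Ioi (by linarith)]
      simp; field_simp
    have e2 : ∫ t in Ioi (0:ℝ), (Real.exp (-p * t) * u t - Real.exp (-p * t) * u s) ≤
        ∫ t in Ioi (0:ℝ), (Ioc 0 s).indicator (fun t => u t - u s) t := by
      refine setIntegral_mono_on ((hi p hp0).sub hexp) ?_ measurableSet_Ioi ?_
      · exact ((integrable_indicator_iff measurableSet_Ioc).2 hus').integrableOn
      · intro t ht
        have ht : 0 < t := ht
        rw [← mul_sub]
        by_cases h : t ≤ s
        · rw [indicator_of_mem (mem_Ioc.2 ⟨ht, h⟩)]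
          refine mul_le_of_le_one_left (sub_nonneg.2 (ha ht hs h)) ?_
          rw [Real.exp_le_one_iff]; nlinarith
        · rw [indicator_of_notMem (fun hh => h hh.2)]
          push Not at h
          exact mul_nonpos_of_nonneg_of_nonpos (Real.exp_pos _).le
            (sub_nonpos.2 (ha hs ht h.le))
    rw [integral_sub (hi p hp0) hexp, e1, setIntegral_indicator measurableSet_Ioc,
      inter_eq_right.2 Ioc_subset_Ioi_self, ← hA] at e2
    have := hp p hp0
    rw [neg_div]; linarith
  have h1 : 0 < -u s / (A + 1) := div_pos (by linarith) (by linarith)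
  have h2 := hbound _ h1
  have h3 : -u s ≠ 0 := by linarith
  rw [div_div_cancel₀ h3] at h2
  linarith

lemma taub (V : ℝ → ℝ → ℝ) {x0 : ℝ} (hx0 : x0 ∈ Ioo (0:ℝ) 1) (C : ℝ)
    (h_itg : ∀ T, 1 < T → IntegrableOn (V T) (Icc 0 1))
    (hmono : ∀ T, 1 < T → MonotoneOn (V T) (Ioo 0 1))
    (hnn : ∀ T, 1 < T → ∀ x ∈ Ioo (0:ℝ) 1, 0 ≤ V T x)
    (hmom : ∀ k : ℕ, Tendsto (fun T => ∫ x in Icc (0:ℝ) 1, x ^ k * V T x) atTop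
      (nhds (C / ((k:ℝ) + 1)))) :
    Tendsto (fun T => V T x0) atTop (nhds C) := by
  have hae : ∀ᵐ x ∂(volume.restrict (Icc (0:ℝ) 1)), x ∈ Ioo (0:ℝ) 1 := by
    rw [← restrict_Ioo_eq_restrict_Icc]; exact ae_restrict_mem measurableSet_Ioo
  have hfi : ∀ f : ℝ → ℝ, Continuous f → ∀ T, 1 < T →
      IntegrableOn (fun x => f x * V T x) (Icc 0 1) := fun f hf T hT =>
    (h_itg T hT).continuousOn_mul hf.continuousOn isCompact_Icc
  have hci : ∀ f : ℝ → ℝ, Continuous f → IntegrableOn f (Icc 0 1) := fun f hf =>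
    hf.continuousOn.integrableOn_Icc
  have hpoly : ∀ P : Polynomial ℝ, Tendsto (fun T => ∫ x in Icc (0:ℝ) 1, P.eval x * V T x) atTop
      (nhds (C * ∫ x in Icc (0:ℝ) 1, P.eval x)) := by
    intro P
    induction P using Polynomial.induction_on' with
    | add p q hp hq =>
      have h := hp.add hq
      rw [← mul_add, ← integral_add (hci _ p.continuous) (hci _ q.continuous)] at h
      simp only [Polynomial.eval_add]
      refine h.congr' ?_
      filter_upwards [eventually_gt_atTop 1] with T hT
      rw [← integral_add (hfi _ p.continuous T hT) (hfi _ q.continuous T hT)]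
      simp only [add_mul]
    | monomial n a =>
      have h := (hmom n).const_mul a
      simp only [Polynomial.eval_monomial]
      have e : C * ∫ x in Icc (0:ℝ) 1, a * x ^ n = a * (C / ((n:ℝ) + 1)) := by
        rw [integral_const_mul, integral_Icc_eq_integral_Ioc,
          ← intervalIntegral.integral_of_le zero_le_one]
        simp; ring
      rw [e]
      refine h.congr fun T => ?_
      rw [← integral_const_mul]
      simp only [mul_assoc]
  have hone : Tendsto (fun T => ∫ x in Icc (0:ℝ) 1, V T x) atTop (nhds C) := by
    simpa using hmom 0
  have hcont : ∀ f : ℝ → ℝ, Continuous f → Tendsto (fun T => ∫ x in Icc (0:ℝ) 1, f x * V T x) atTop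
      (nhds (C * ∫ x in Icc (0:ℝ) 1, f x)) := by
    intro f hf
    rw [Metric.tendsto_nhds]
    intro ε hε
    set δ : ℝ := ε / (2 * |C| + 2) / 2 with hδ
    have hden : 0 < 2 * |C| + 2 := by positivity
    have hδ0 : 0 < δ := by positivity
    obtain ⟨P, hP⟩ := exists_polynomial_near_of_continuousOn 0 1 f hf.continuousOn δ hδ0
    have hV := (hone.eventually (gt_mem_nhds (lt_of_le_of_lt (le_abs_self C) (lt_add_one |C|))))
    filter_upwards [Metric.tendsto_nhds.1 (hpoly P) δ hδ0, hV, eventually_gt_atTop 1] with T h1 h2 hT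
    rw [Real.dist_eq] at h1 ⊢
    have a1 : |(∫ x in Icc (0:ℝ) 1, P.eval x * V T x) - ∫ x in Icc (0:ℝ) 1, f x * V T x|
        ≤ δ * ∫ x in Icc (0:ℝ) 1, V T x := by
      rw [← integral_sub (hfi _ P.continuous T hT) (hfi _ hf T hT), ← Real.norm_eq_abs,
        ← integral_const_mul]
      refine norm_integral_le_of_norm_le ((h_itg T hT).const_mul δ) ?_
      filter_upwards [hae] with x hx
      rw [← sub_mul, norm_mul, Real.norm_eq_abs, Real.norm_eq_abs, abs_of_nonneg (hnn T hT x hx)]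
      exact mul_le_mul_of_nonneg_right (hP x ⟨hx.1.le, hx.2.le⟩).le (hnn T hT x hx)
    have a2 : |(∫ x in Icc (0:ℝ) 1, P.eval x) - ∫ x in Icc (0:ℝ) 1, f x| ≤ δ := by
      rw [← integral_sub (hci _ P.continuous) (hci _ hf), ← Real.norm_eq_abs]
      have := norm_integral_le_of_norm_le (μ := volume.restrict (Icc (0:ℝ) 1)) (g := fun _ => δ)
        (f := fun x => P.eval x - f x) (by simp) (by
          filter_upwards [hae] with x hx
          exact (hP x ⟨hx.1.le, hx.2.le⟩).le)
      simpa using this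
    have a3 : |C * (∫ x in Icc (0:ℝ) 1, P.eval x) - C * ∫ x in Icc (0:ℝ) 1, f x| ≤ |C| * δ := by
      rw [← mul_sub, abs_mul]; gcongr
    have a4 : δ * ∫ x in Icc (0:ℝ) 1, V T x ≤ δ * (|C| + 1) := by gcongr
    have a5 : δ * (2 * |C| + 2) = ε / 2 := by rw [hδ]; field_simp
    rw [abs_lt] at h1 ⊢
    rw [abs_le] at a1 a3
    constructor <;> nlinarith [a1.1, a1.2, a3.1, a3.2, h1.1, h1.2]
  -- two test functions
  have hpos : ∀ f : ℝ → ℝ, Continuous f → (∀ x, 0 ≤ f x) → (∃ c ∈ Icc (0:ℝ) 1, 0 < f c) →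
      0 < ∫ x in Icc (0:ℝ) 1, f x := by
    intro f hf h0 h1
    rw [integral_Icc_eq_integral_Ioc, ← intervalIntegral.integral_of_le zero_le_one]
    exact intervalIntegral.integral_pos zero_lt_one hf.continuousOn (fun x _ => h0 x) h1
  have hfc : Continuous fun x : ℝ => max 0 (x0 - x) := by fun_prop
  have hgc : Continuous fun x : ℝ => max 0 (x - x0) := by fun_prop
  have hf := hpos _ hfc (fun x => le_max_left _ _) ⟨0, by simp, by simpa using hx0.1⟩
  have hg := hpos _ hgc (fun x => le_max_left _ _) ⟨1, by simp, by simpa using hx0.2⟩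
  have tf := (hcont _ hfc).div_const (∫ x in Icc (0:ℝ) 1, max 0 (x0 - x))
  have tg := (hcont _ hgc).div_const (∫ x in Icc (0:ℝ) 1, max 0 (x - x0))
  rw [mul_div_cancel_right₀ _ hf.ne'] at tf
  rw [mul_div_cancel_right₀ _ hg.ne'] at tg
  refine tendsto_of_tendsto_of_tendsto_of_le_of_le' tf tg ?_ ?_
  · filter_upwards [eventually_gt_atTop 1] with T hT
    rw [div_le_iff₀ hf, ← integral_const_mul]
    refine integral_mono_ae (hfi _ hfc T hT) ((hci _ hfc).const_mul _) ?_
    filter_upwards [hae] with x hx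
    rcases le_total x x0 with h | h
    · have := hmono T hT hx hx0 h
      have h2 : 0 ≤ max 0 (x0 - x) := le_max_left _ _
      nlinarith
    · rw [max_eq_left (by linarith)]; simp
  · filter_upwards [eventually_gt_atTop 1] with T hT
    rw [le_div_iff₀ hg, ← integral_const_mul]
    refine integral_mono_ae ((hci _ hgc).const_mul _) (hfi _ hgc T hT) ?_
    filter_upwards [hae] with x hx
    rcases le_total x x0 with h | h
    · rw [max_eq_left (by linarith)]; simp
    · have := hmono T hT hx0 hx h
      have h2 : 0 ≤ max 0 (x - x0) := le_max_left _ _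
      nlinarith

theorem relaxation_solution_log_decay (μ : ℝ → ℝ)
    (hc : ContinuousOn μ (Set.Icc 0 1))
    (hnn : ∀ α ∈ Set.Icc (0:ℝ) 1, 0 ≤ μ α)
    (hne : ∃ α ∈ Set.Icc (0:ℝ) 1, μ α ≠ 0)
    (hC2 : ContDiffOn ℝ 2 μ (Set.Icc 0 1))
    (h1 : μ 1 ≠ 0) (h0 : μ 0 ≠ 0)
    (lam : ℝ) (hlam : lam < 0)
    (u : ℝ → ℝ) (hu : ContinuousOn u (Set.Ioi 0))
    (hloc : LocallyIntegrableOn u (Set.Ioi 0))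
    (hlap : ∀ p : ℝ, 0 < p →
      IntegrableOn (fun t : ℝ => Real.exp (-p * t) * u t) (Set.Ioi 0) ∧
      ∫ t in Set.Ioi (0:ℝ), Real.exp (-p * t) * u t
        = Kreal μ p / (p * Kreal μ p - lam)) :
    Tendsto (fun t : ℝ => Real.log t * u t) atTop (nhds (μ 0 / (-lam))) := by
  have hc0 : 0 < -lam := by linarith
  have hK : ∀ p : ℝ, 0 < p → p * Kreal μ p = gfun μ p := fun p hp => Kreal_aux μ hp
  have hL : ∀ p : ℝ, 0 < p → p * ∫ t in Set.Ioi (0:ℝ), Real.exp (-p * t) * u t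
      = gfun μ p / (gfun μ p + -lam) := by
    intro p hp
    rw [(hlap p hp).2, hK p hp, ← hK p hp, ← sub_eq_add_neg, mul_div_assoc]
  have hanti : AntitoneOn u (Ioi 0) := by
    refine u_anti hu (phi_cm hc hnn hc0) (by simpa using (hlap 1 one_pos).1) (fun k => ?_)
    rw [hL _ (by positivity)]
    have := gfun_nonneg hnn (p := (k:ℝ) + 1) (by positivity)
    have : gfun μ ((k:ℝ) + 1) + -lam ≠ 0 := by positivity
    field_simp; ring
  have hunn := u_nonneg hanti (fun p hp => (hlap p hp).1) (fun p hp => by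
    have h2 := gfun_nonneg hnn hp
    have h3 : 0 ≤ p * ∫ t in Set.Ioi (0:ℝ), Real.exp (-p * t) * u t := by
      rw [hL p hp]; positivity
    exact nonneg_of_mul_nonneg_right h3 hp)
  have hlogmem : ∀ T, 1 < T → ∀ x ∈ Ioo (0:ℝ) 1, T * (-Real.log x) ∈ Ioi (0:ℝ) := by
    intro T hT x hx
    have := Real.log_neg hx.1 hx.2
    exact mul_pos (zero_lt_one.trans hT) (neg_pos.2 this)
  have hsc : ∀ (k : ℕ) (T : ℝ), 1 < T → (fun t : ℝ => Real.exp (-t) *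
      (Real.exp (-t) ^ k * (Real.log T * u (T * (-Real.log (Real.exp (-t))))))) =
      fun t => Real.log T * (fun s => Real.exp (-(((k:ℝ) + 1) / T) * s) * u s) (T * t) := by
    intro k T hT
    ext t
    simp only [Real.log_exp, neg_neg]
    have : Real.exp (-(((k:ℝ) + 1) / T) * (T * t)) = Real.exp (-t) * Real.exp (-t) ^ k := by
      rw [← Real.exp_nat_mul, ← Real.exp_add]
      congr 1
      have : T ≠ 0 := by linarith
      field_simp; ring
    rw [this]; ring
  have key := taub (fun T x => Real.log T * u (T * (-Real.log x))) (x0 := Real.exp (-1))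
    ⟨Real.exp_pos _, by simp⟩ (μ 0 / (-lam)) ?_ ?_ ?_ ?_
  · simpa using key
  · intro T hT
    have hT0 : 0 < T := by linarith
    rw [cov_integrable]
    have h := hsc 0 T hT
    simp only [pow_zero, one_mul] at h
    rw [h]
    refine Integrable.const_mul ?_ _
    refine (integrableOn_Ioi_comp_mul_left_iff
      (fun s => Real.exp (-((((0:ℕ):ℝ) + 1) / T) * s) * u s) 0 hT0).2 ?_
    rw [mul_zero]
    exact (hlap _ (by positivity)).1
  · intro T hT x hx y hy hxy
    have := Real.log_pos hT
    refine mul_le_mul_of_nonneg_left (hanti (hlogmem T hT y hy) (hlogmem T hT x hx) ?_) this.le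
    have := Real.log_le_log hx.1 hxy
    exact mul_le_mul_of_nonneg_left (by linarith) (by linarith)
  · intro T hT x hx
    exact mul_nonneg (Real.log_pos hT).le (hunn _ (hlogmem T hT x hx))
  · intro k
    have hk : (0:ℝ) < (k:ℝ) + 1 := by positivity
    have h := (scaled_lim hc hc0 hk).div_const ((k:ℝ) + 1)
    refine h.congr' ?_
    filter_upwards [eventually_gt_atTop 1] with T hT
    have hT0 : 0 < T := by linarith
    rw [cov_integral, hsc k T hT, integral_const_mul,
      integral_comp_mul_left_Ioi (fun s => Real.exp (-(((k:ℝ) + 1) / T) * s) * u s) _ hT0, mul_zero,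
      ← hL _ (by positivity), smul_eq_mul]
    field_simp
end
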